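/- Let a₁ ≠ 0 be real and s > −3/4. Then there exist b ∈ (1/2, 1), ε > 0 and C > 0, depending only on s, b and b', such that for all σ ≥ 0, all b' ∈ [b, b+ε), and all Schwartz functions f, g on ℝ²: ‖∂_x(fg)‖_{X_{a₁}^{σ,s,b'−1}} ≤ C ‖f‖_{X_{a₁}^{σ,s,b}} ‖g‖_{X_{a₁}^{σ,s,b}}. -/

import Mathlib

open MeasureTheory Set Filter
open scoped ENNReal

/-- Space-time Fourier transform `f̂(τ,ξ) = ∫∫ e^{-i(tτ + xξ)} f(t,x) dt dx`. -/
noncomputable def FT2 (f : ℝ → ℝ → ℂ) (τ ξ : ℝ) : ℂ :=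
  ∫ t : ℝ, ∫ x : ℝ, Complex.exp (-Complex.I * (t * τ + x * ξ)) * f t x

/-- Gevrey–Bourgain norm `‖f‖_{X_a^{σ,s,b}}`, valued in `ℝ≥0∞`. -/
noncomputable def XNorm (a σ s b : ℝ) (f : ℝ → ℝ → ℂ) : ℝ≥0∞ :=
  (∫⁻ τ : ℝ, ∫⁻ ξ : ℝ, ENNReal.ofReal
      (Real.exp (2 * σ * |ξ|) * (1 + |ξ|) ^ (2 * s) *
        (1 + |τ - a * ξ ^ 3|) ^ (2 * b) * ‖FT2 f τ ξ‖ ^ 2)) ^ (1/2 : ℝ)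


section Fourier
open FourierTransform LineDeriv

/-- Transport of a Schwartz function to the Euclidean plane. -/
noncomputable def toV (f : SchwartzMap (ℝ × ℝ) ℂ) : SchwartzMap (WithLp 2 (ℝ × ℝ)) ℂ :=
  SchwartzMap.compCLMOfContinuousLinearEquiv ℂ (WithLp.prodContinuousLinearEquiv 2 ℝ ℝ ℝ) f

lemma toV_apply (f : SchwartzMap (ℝ × ℝ) ℂ) (v : WithLp 2 (ℝ × ℝ)) :
    toV f v = f (v.fst, v.snd) := rfl

lemma FT2_eq (f : SchwartzMap (ℝ × ℝ) ℂ) (τ ξ : ℝ) :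
    FT2 (fun t x => f (t, x)) τ ξ =
      𝓕⁻ (toV f) (WithLp.toLp 2 ((-(2 * Real.pi)⁻¹) • (τ, ξ))) := by
  rw [SchwartzMap.fourierInv_coe, Real.fourierInv_eq]
  have hmp := (WithLp.volume_preserving_symm_measurableEquiv_toLp_prod ℝ ℝ).symm
  rw [← hmp.integral_comp (MeasurableEquiv.measurableEmbedding _)]
  unfold FT2
  have hint : Integrable (fun p : ℝ × ℝ =>
      Complex.exp (-Complex.I * (p.1 * τ + p.2 * ξ)) * f (p.1, p.2)) (volume.prod volume) := by
    have h1 : Integrable (fun p : ℝ × ℝ => f p) (volume.prod volume) := f.integrable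
    refine h1.bdd_mul (c := 1) (Continuous.aestronglyMeasurable (by fun_prop)) ?_
    filter_upwards with p
    have : -Complex.I * (p.1 * τ + p.2 * ξ) = ((-(p.1 * τ + p.2 * ξ) : ℝ) : ℂ) * Complex.I := by
      push_cast; ring
    rw [this, Complex.norm_exp_ofReal_mul_I]
  rw [← MeasureTheory.integral_prod _ hint]
  refine integral_congr_ae (Eventually.of_forall fun p => ?_)
  change _ = (Real.fourierChar _) • (toV f (WithLp.toLp 2 p))
  rw [toV_apply, Circle.smul_def, Real.fourierChar_apply, smul_eq_mul]
  rw [WithLp.prod_inner_apply]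
  simp
  field_simp
  ring_nf
  simp

lemma FT2_deriv (f g : SchwartzMap (ℝ × ℝ) ℂ) (τ ξ : ℝ) :
    ‖FT2 (fun t x => deriv (fun y => f (t, y) * g (t, y)) x) τ ξ‖ =
      |ξ| * ‖∫ t : WithLp 2 (ℝ × ℝ), 𝓕⁻ (toV f) t *
        𝓕⁻ (toV g) (WithLp.toLp 2 ((-(2 * Real.pi)⁻¹) • (τ, ξ)) - t)‖ := by
  set H : SchwartzMap (ℝ × ℝ) ℂ := SchwartzMap.pairing (ContinuousLinearMap.mul ℂ ℂ) f g with hH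
  have h1 : (fun t x => deriv (fun y => f (t, y) * g (t, y)) x) =
      fun t x => (∂_{((0 : ℝ), (1 : ℝ))} H) (t, x) := by
    funext t x
    rw [SchwartzMap.lineDerivOp_apply_eq_fderiv]
    have h2 : HasFDerivAt H (fderiv ℝ H (t, x)) (t, x) :=
      (H.differentiable.differentiableAt).hasFDerivAt
    have h3 : HasDerivAt (fun y : ℝ => (t, y)) ((0 : ℝ), (1 : ℝ)) x :=
      (hasDerivAt_const x t).prodMk (hasDerivAt_id x)
    have h4 := h2.comp_hasDerivAt x h3
    exact h4.deriv
  rw [h1, FT2_eq]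
  have h2 : toV (∂_{((0 : ℝ), (1 : ℝ))} H) = ∂_{(WithLp.toLp 2 ((0 : ℝ), (1 : ℝ)))} (toV H) := by
    unfold toV
    rw [SchwartzMap.lineDerivOp_compCLMOfContinuousLinearEquiv]
    rfl
  rw [h2, SchwartzMap.fourierInv_lineDerivOp_eq]
  have h3 : 𝓕⁻ (toV H) = SchwartzMap.convolution (ContinuousLinearMap.mul ℂ ℂ)
      (𝓕⁻ (toV f)) (𝓕⁻ (toV g)) := by
    set u := SchwartzMap.convolution (ContinuousLinearMap.mul ℂ ℂ)
      (𝓕⁻ (toV f)) (𝓕⁻ (toV g)) with hu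
    have h5 : 𝓕 u = toV H := by
      rw [hu, SchwartzMap.fourier_convolution]
      simp only [FourierTransform.fourier_fourierInv_eq]
      rfl
    rw [← h5]
    exact FourierTransform.fourierInv_fourier_eq u
  have h4 : (fun x : WithLp 2 (ℝ × ℝ) => inner ℝ x (WithLp.toLp 2 ((0 : ℝ), (1 : ℝ)))).HasTemperateGrowth := by
    fun_prop
  rw [smul_apply, SchwartzMap.smulLeftCLM_apply_apply h4, norm_smul, norm_smul,
    h3, SchwartzMap.convolution_apply]
  rw [← mul_assoc]
  congr 1
  rw [WithLp.prod_inner_apply]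
  simp [abs_of_pos Real.pi_pos]
  field_simp

lemma FT2_bound (f g : SchwartzMap (ℝ × ℝ) ℂ) (τ ξ : ℝ) :
    ‖FT2 (fun t x => deriv (fun y => f (t, y) * g (t, y)) x) τ ξ‖ₑ ≤
      ENNReal.ofReal |ξ| * ∫⁻ p : ℝ × ℝ, ‖FT2 (fun t x => f (t, x)) p.1 p.2‖ₑ *
        ‖FT2 (fun t x => g (t, x)) (τ - p.1) (ξ - p.2)‖ₑ := by
  rw [← ofReal_norm, FT2_deriv, ENNReal.ofReal_mul (abs_nonneg _), ofReal_norm]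
  gcongr
  refine (enorm_integral_le_lintegral_enorm _).trans ?_
  have hmp := (WithLp.volume_preserving_symm_measurableEquiv_toLp_prod ℝ ℝ).symm
  rw [← hmp.lintegral_comp_emb (MeasurableEquiv.measurableEmbedding _)]
  set c : ℝ := -(2 * Real.pi)⁻¹ with hc
  have hc0 : c ≠ 0 := by rw [hc]; exact neg_ne_zero.mpr (by positivity)
  set Φ : ℝ × ℝ → ℝ≥0∞ := fun p => ‖𝓕⁻ (toV f) (WithLp.toLp 2 p) *
        𝓕⁻ (toV g) (WithLp.toLp 2 (c • (τ, ξ)) - WithLp.toLp 2 p)‖ₑ with hΦ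
  have hR : ∀ p : ℝ × ℝ, ‖FT2 (fun t x => f (t, x)) p.1 p.2‖ₑ *
        ‖FT2 (fun t x => g (t, x)) (τ - p.1) (ξ - p.2)‖ₑ = Φ (c • p) := by
    intro p
    rw [FT2_eq, FT2_eq, hΦ]
    simp only [enorm_mul]
    congr 3
    rw [← WithLp.toLp_sub, ← smul_sub]
    rfl
  simp_rw [hR]
  change ∫⁻ p : ℝ × ℝ, Φ p ≤ _
  have hm : Measurable Φ := by
    apply Continuous.measurable
    have hf := (𝓕⁻ (toV f)).continuous
    have hg := (𝓕⁻ (toV g)).continuous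
    have := WithLp.prod_continuous_toLp 2 ℝ ℝ
    fun_prop
  have h5 : ∫⁻ p : ℝ × ℝ, Φ (c • p) =
      ENNReal.ofReal |(c ^ Module.finrank ℝ (ℝ × ℝ))⁻¹| * ∫⁻ p : ℝ × ℝ, Φ p := by
    rw [← lintegral_map hm (measurable_const_smul c), Measure.map_addHaar_smul _ hc0,
      lintegral_smul_measure, smul_eq_mul]
  rw [h5]
  have h6 : 1 ≤ |(c ^ Module.finrank ℝ (ℝ × ℝ))⁻¹| := by
    have : Module.finrank ℝ (ℝ × ℝ) = 2 := by simp
    rw [this, hc]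
    have h7 : ((-(2 * Real.pi)⁻¹) ^ 2)⁻¹ = (2 * Real.pi) ^ 2 := by
      field_simp
    rw [h7, abs_of_nonneg (by positivity)]
    nlinarith [Real.pi_gt_three]
  calc ∫⁻ p : ℝ × ℝ, Φ p = 1 * ∫⁻ p : ℝ × ℝ, Φ p := (one_mul _).symm
    _ ≤ _ := by
      gcongr
      rw [← ENNReal.ofReal_one]
      exact ENNReal.ofReal_le_ofReal h6

lemma FT2_continuous (f : SchwartzMap (ℝ × ℝ) ℂ) :
    Continuous (fun p : ℝ × ℝ => FT2 (fun t x => f (t, x)) p.1 p.2) := by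
  simp_rw [FT2_eq]
  have hf := (𝓕⁻ (toV f)).continuous
  have := WithLp.prod_continuous_toLp 2 ℝ ℝ
  fun_prop

end Fourier

section L2

lemma cs_lintegral {α : Type*} [MeasurableSpace α] (μ : Measure α) {f g : α → ℝ≥0∞}
    (hf : Measurable f) (hg : Measurable g) :
    ∫⁻ a, f a * g a ∂μ ≤ (∫⁻ a, f a ^ 2 ∂μ) ^ (1/2 : ℝ) * (∫⁻ a, g a ^ 2 ∂μ) ^ (1/2 : ℝ) := by
  have h := ENNReal.lintegral_mul_le_Lp_mul_Lq μ Real.HolderConjugate.two_two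
    hf.aemeasurable hg.aemeasurable
  simpa using h

lemma kernel_bound {E : Type*} [MeasurableSpace E] (μ : Measure E) [SFinite μ]
    {P : E → ℝ≥0∞} {k Q : E → E → ℝ≥0∞} {M : ℝ≥0∞} (hP : Measurable P)
    (hk : Measurable (Function.uncurry k)) (hQ : Measurable (Function.uncurry Q))
    (hM : ∀ x, ∫⁻ y, k x y ^ 2 ∂μ ≤ M) :
    ∫⁻ x, ∫⁻ y, P x * (k x y * Q x y) ∂μ ∂μ ≤
      M ^ (1/2 : ℝ) * (∫⁻ x, P x ^ 2 ∂μ) ^ (1/2 : ℝ) *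
        (∫⁻ x, ∫⁻ y, Q x y ^ 2 ∂μ ∂μ) ^ (1/2 : ℝ) := by
  have hPk : Measurable (fun z : E × E => P z.1 * k z.1 z.2) :=
    (hP.comp measurable_fst).mul hk
  have hQ' : Measurable (fun z : E × E => Q z.1 z.2) := hQ
  have h1 : ∫⁻ x, ∫⁻ y, P x * (k x y * Q x y) ∂μ ∂μ =
      ∫⁻ z, (P z.1 * k z.1 z.2) * Q z.1 z.2 ∂(μ.prod μ) := by
    have hm : Measurable (fun z : E × E => (P z.1 * k z.1 z.2) * Q z.1 z.2) := hPk.mul hQ'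
    rw [lintegral_prod _ hm.aemeasurable]
    simp only [mul_assoc]
  rw [h1]
  refine (cs_lintegral _ hPk hQ').trans ?_
  rw [lintegral_prod _ (hPk.pow_const 2).aemeasurable,
    lintegral_prod _ (hQ'.pow_const 2).aemeasurable, ← ENNReal.mul_rpow_of_nonneg M _ (by norm_num : (0:ℝ) ≤ 1/2)]
  refine mul_le_mul' (ENNReal.rpow_le_rpow (z := 1/2) ?_ (by norm_num)) le_rfl
  rw [← lintegral_const_mul _ (hP.pow_const 2)]
  refine lintegral_mono fun x => ?_
  simp only [mul_pow]
  rw [lintegral_const_mul, mul_comm]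
  · gcongr
    exact hM x
  · exact (hk.comp measurable_prodMk_left).pow_const 2

lemma dual_bound {E : Type*} [MeasurableSpace E] (μ : Measure E) [SigmaFinite μ]
    {T : E → ℝ≥0∞} (hT : Measurable T) (C : ℝ≥0∞)
    (h : ∀ H : E → ℝ≥0∞, Measurable H →
      ∫⁻ x, H x * T x ∂μ ≤ C * (∫⁻ x, H x ^ 2 ∂μ) ^ (1/2 : ℝ)) :
    ∫⁻ x, T x ^ 2 ∂μ ≤ C ^ 2 := by
  set S := spanningSets μ
  let H : ℕ → E → ℝ≥0∞ := fun n => (S n).indicator (fun x => min (T x) n)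
  have hHm : ∀ n, Measurable (H n) := fun n =>
    (hT.min measurable_const).indicator (measurableSet_spanningSets μ n)
  have hHT : ∀ n x, H n x ≤ T x := by
    intro n x
    simp only [H]
    by_cases hx : x ∈ S n <;> simp [hx]
  have hHn : ∀ n, ∫⁻ x, H n x ^ 2 ∂μ ≤ C ^ 2 := by
    intro n
    have hfin : ∫⁻ x, H n x ^ 2 ∂μ ≠ ⊤ := by
      have : ∫⁻ x, H n x ^ 2 ∂μ ≤ ∫⁻ x, (S n).indicator (fun _ => (n : ℝ≥0∞) ^ 2) x ∂μ := by
        refine lintegral_mono fun x => ?_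
        simp only [H]
        by_cases hx : x ∈ S n
        · simp only [hx, indicator_of_mem]
          gcongr
          exact min_le_right _ _
        · simp [hx]
      refine ne_top_of_le_ne_top ?_ this
      rw [lintegral_indicator_const (measurableSet_spanningSets μ n)]
      exact ENNReal.mul_ne_top (by simp) (measure_spanningSets_lt_top μ n).ne
    set I := ∫⁻ x, H n x ^ 2 ∂μ with hI
    have h1 : I ≤ C * I ^ (1/2 : ℝ) := by
      refine le_trans ?_ (h (H n) (hHm n))
      refine lintegral_mono fun x => ?_
      simp only [sq]
      gcongr
      exact hHT n x
    by_cases h0 : I = 0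
    · rw [h0]; exact zero_le
    have h2 : I = I ^ (1/2 : ℝ) * I ^ (1/2 : ℝ) := by
      rw [← ENNReal.rpow_add _ _ h0 hfin]; norm_num
    have h3 : I ^ (1/2 : ℝ) ≤ C := by
      rw [h2] at h1
      have h4 : I ^ (1/2 : ℝ) ≠ 0 := by simp [h0]
      have h5 : I ^ (1/2 : ℝ) ≠ ⊤ := by simp [hfin]
      rw [← h2] at h1
      nth_rewrite 1 [h2] at h1
      exact (ENNReal.mul_le_mul_iff_left h4 h5).mp h1
    rw [h2, sq]
    gcongr
  have hlim : ∀ x, Tendsto (fun n => H n x ^ 2) atTop (nhds (T x ^ 2)) := by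
    intro x
    have h1 : Tendsto (fun n : ℕ => min (T x) (n : ℝ≥0∞)) atTop (nhds (T x)) := by
      have := (tendsto_const_nhds (x := T x)).min ENNReal.tendsto_nat_nhds_top
      simpa using this
    have h2 : Tendsto (fun n => H n x) atTop (nhds (T x)) := by
      refine h1.congr' ?_
      filter_upwards [eventually_mem_spanningSets μ x] with n hn
      simp only [H]
      rw [indicator_of_mem hn]
    exact ((ENNReal.continuous_pow 2).tendsto _).comp h2
  calc ∫⁻ x, T x ^ 2 ∂μ = ∫⁻ x, liminf (fun n => H n x ^ 2) atTop ∂μ := by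
        refine lintegral_congr fun x => ?_
        exact (hlim x).liminf_eq.symm
    _ ≤ liminf (fun n => ∫⁻ x, H n x ^ 2 ∂μ) atTop :=
        lintegral_liminf_le fun n => (hHm n).pow_const 2
    _ ≤ C ^ 2 := by
        refine (liminf_le_liminf (Eventually.of_forall hHn)).trans ?_
        simp

variable {E : Type*} [MeasurableSpace E] [AddCommGroup E] [MeasurableAdd₂ E] [MeasurableNeg E]
  [MeasurableSub₂ E]

lemma conv_sq (μ : Measure E) [SFinite μ] [μ.IsAddLeftInvariant] [μ.IsNegInvariant]
    {F G : E → ℝ≥0∞} (hF : Measurable F) (hG : Measurable G) :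
    ∫⁻ x, ∫⁻ y, (F x * G (x - y)) ^ 2 ∂μ ∂μ = (∫⁻ x, F x ^ 2 ∂μ) * ∫⁻ x, G x ^ 2 ∂μ := by
  rw [← lintegral_mul_const _ (hF.pow_const 2)]
  refine lintegral_congr fun x => ?_
  simp only [mul_pow]
  have hm : Measurable (fun y => G (x - y) ^ 2) :=
    (hG.comp (measurable_const.sub measurable_id)).pow_const 2
  rw [lintegral_const_mul _ hm]
  congr 1
  exact lintegral_sub_left_eq_self (fun y => G y ^ 2) x

lemma tri_two (μ : Measure E) [SFinite μ] [μ.IsAddLeftInvariant] [μ.IsNegInvariant]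
    {k : E → E → ℝ≥0∞} {M : ℝ≥0∞}
    (hk : Measurable (Function.uncurry k)) (hM : ∀ x, ∫⁻ y, k x y ^ 2 ∂μ ≤ M)
    {F G H : E → ℝ≥0∞} (hF : Measurable F) (hG : Measurable G) (hH : Measurable H) :
    ∫⁻ z, ∫⁻ z₁, H z * (k z₁ z * (F z₁ * G (z - z₁))) ∂μ ∂μ ≤
      M ^ (1/2 : ℝ) * (∫⁻ x, F x ^ 2 ∂μ) ^ (1/2 : ℝ) * (∫⁻ x, G x ^ 2 ∂μ) ^ (1/2 : ℝ)
        * (∫⁻ x, H x ^ 2 ∂μ) ^ (1/2 : ℝ) := by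
  have hG' : Measurable (fun p : E × E => G (p.2 - p.1)) :=
    hG.comp (measurable_snd.sub measurable_fst)
  have hQ : Measurable (Function.uncurry (fun z₁ z => H z * G (z - z₁))) :=
    (hH.comp measurable_snd).mul hG'
  have hk' : Measurable (fun p : E × E => k p.2 p.1) := hk.comp measurable_swap
  have hG'' : Measurable (fun p : E × E => G (p.1 - p.2)) :=
    hG.comp (measurable_fst.sub measurable_snd)
  rw [lintegral_lintegral_swap]
  · have h := kernel_bound μ hF hk hQ hM
    have h2 : ∫⁻ x, ∫⁻ y, (H y * G (y - x)) ^ 2 ∂μ ∂μ =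
        (∫⁻ x, H x ^ 2 ∂μ) * ∫⁻ x, G x ^ 2 ∂μ := by
      rw [lintegral_lintegral_swap]
      · exact conv_sq μ hH hG
      · exact (hQ.pow_const 2).aemeasurable
    rw [h2, ENNReal.mul_rpow_of_nonneg _ _ (by norm_num)] at h
    calc _ = ∫⁻ x, ∫⁻ y, F x * (k x y * (H y * G (y - x))) ∂μ ∂μ := by
          refine lintegral_congr fun x => lintegral_congr fun y => ?_
          ring
      _ ≤ _ := h
      _ = _ := by ring
  · exact ((hH.comp measurable_fst).mul
      (hk'.mul ((hF.comp measurable_snd).mul hG''))).aemeasurable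

lemma tri_bound (μ : Measure E) [SigmaFinite μ] [μ.IsAddLeftInvariant] [μ.IsNegInvariant]
    {k : E → E → ℝ≥0∞} {M : ℝ≥0∞}
    (hk : Measurable (Function.uncurry k)) (hM : ∀ x, ∫⁻ y, k x y ^ 2 ∂μ ≤ M)
    {F G : E → ℝ≥0∞} (hF : Measurable F) (hG : Measurable G) :
    ∫⁻ z, (∫⁻ z₁, (k z z₁ + k z₁ z + k (z - z₁) z) * (F z₁ * G (z - z₁)) ∂μ) ^ 2 ∂μ ≤
      (3 * (M ^ (1/2 : ℝ) * (∫⁻ x, F x ^ 2 ∂μ) ^ (1/2 : ℝ) *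
        (∫⁻ x, G x ^ 2 ∂μ) ^ (1/2 : ℝ))) ^ 2 := by
  have hk' : Measurable (fun p : E × E => k p.2 p.1) := hk.comp measurable_swap
  have hk'' : Measurable (fun p : E × E => k (p.1 - p.2) p.1) :=
    hk.comp ((measurable_fst.sub measurable_snd).prodMk measurable_fst)
  have hk0 : Measurable (fun p : E × E => k p.1 p.2) := hk
  have hG'' : Measurable (fun p : E × E => G (p.1 - p.2)) :=
    hG.comp (measurable_fst.sub measurable_snd)
  have hFG : Measurable (fun p : E × E => F p.2 * G (p.1 - p.2)) :=
    (hF.comp measurable_snd).mul hG''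
  apply dual_bound
  · exact Measurable.lintegral_prod_right' (f := fun p : E × E =>
      (k p.1 p.2 + k p.2 p.1 + k (p.1 - p.2) p.1) * (F p.2 * G (p.1 - p.2)))
      (((hk0.add hk').add hk'').mul hFG)
  intro H hH
  have hH1 : Measurable (fun p : E × E => H p.1) := hH.comp measurable_fst
  have e1 : ∀ z, H z * ∫⁻ z₁, (k z z₁ + k z₁ z + k (z - z₁) z) * (F z₁ * G (z - z₁)) ∂μ =
      ∫⁻ z₁, H z * (k z z₁ * (F z₁ * G (z - z₁))) ∂μ +
      ∫⁻ z₁, H z * (k z₁ z * (F z₁ * G (z - z₁))) ∂μ +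
      ∫⁻ z₁, H z * (k z₁ z * (G z₁ * F (z - z₁))) ∂μ := by
    intro z
    have m0 : Measurable (fun z₁ => k z z₁) := hk0.comp measurable_prodMk_left
    have m1 : Measurable (fun z₁ => k z₁ z) := hk'.comp measurable_prodMk_left
    have m2 : Measurable (fun z₁ => k (z - z₁) z) := hk''.comp measurable_prodMk_left
    have m3 : Measurable (fun z₁ => F z₁ * G (z - z₁)) := hFG.comp measurable_prodMk_left
    have e3 : ∫⁻ z₁, H z * (k z₁ z * (G z₁ * F (z - z₁))) ∂μ =
        ∫⁻ z₁, H z * (k (z - z₁) z * (F z₁ * G (z - z₁))) ∂μ := by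
      rw [← lintegral_sub_left_eq_self _ z]
      refine lintegral_congr fun y => ?_
      rw [sub_sub_cancel, mul_comm (G _)]
    have n1 : Measurable (fun z₁ => (k z z₁ + k z₁ z + k (z - z₁) z) * (F z₁ * G (z - z₁))) :=
      ((m0.add m1).add m2).mul m3
    have n2 : Measurable (fun z₁ => H z * (k z z₁ * (F z₁ * G (z - z₁)))) :=
      (m0.mul m3).const_mul _
    have n3 : Measurable (fun z₁ => H z * (k z₁ z * (F z₁ * G (z - z₁)))) :=
      (m1.mul m3).const_mul _
    have n4 : Measurable (fun z₁ => H z * (k z z₁ * (F z₁ * G (z - z₁))) +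
      H z * (k z₁ z * (F z₁ * G (z - z₁)))) := n2.add n3
    rw [e3, ← lintegral_const_mul _ n1, ← lintegral_add_left n2, ← lintegral_add_left n4]
    refine lintegral_congr fun y => ?_
    ring
  simp_rw [e1]
  have M1 : Measurable (fun z => ∫⁻ z₁, H z * (k z z₁ * (F z₁ * G (z - z₁))) ∂μ) :=
    Measurable.lintegral_prod_right' (f := fun p : E × E =>
      H p.1 * (k p.1 p.2 * (F p.2 * G (p.1 - p.2)))) (hH1.mul (hk0.mul hFG))
  have M2 : Measurable (fun z => ∫⁻ z₁, H z * (k z₁ z * (F z₁ * G (z - z₁))) ∂μ) :=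
    Measurable.lintegral_prod_right' (f := fun p : E × E =>
      H p.1 * (k p.2 p.1 * (F p.2 * G (p.1 - p.2)))) (hH1.mul (hk'.mul hFG))
  have M3 : Measurable (fun z => ∫⁻ z₁, H z * (k z z₁ * (F z₁ * G (z - z₁))) ∂μ +
      ∫⁻ z₁, H z * (k z₁ z * (F z₁ * G (z - z₁))) ∂μ) := M1.add M2
  rw [lintegral_add_left M3, lintegral_add_left M1]
  have b1 : ∫⁻ z, ∫⁻ z₁, H z * (k z z₁ * (F z₁ * G (z - z₁))) ∂μ ∂μ ≤
      M ^ (1/2 : ℝ) * (∫⁻ x, F x ^ 2 ∂μ) ^ (1/2 : ℝ) * (∫⁻ x, G x ^ 2 ∂μ) ^ (1/2 : ℝ)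
        * (∫⁻ x, H x ^ 2 ∂μ) ^ (1/2 : ℝ) := by
    have h := kernel_bound μ hH hk (Q := fun z z₁ => F z₁ * G (z - z₁)) hFG hM
    have h2 : ∫⁻ x, ∫⁻ y, (F y * G (x - y)) ^ 2 ∂μ ∂μ =
        (∫⁻ x, F x ^ 2 ∂μ) * ∫⁻ x, G x ^ 2 ∂μ := by
      rw [lintegral_lintegral_swap (hFG.pow_const 2).aemeasurable,
        ← lintegral_mul_const _ (hF.pow_const 2)]
      refine lintegral_congr fun x => ?_
      have hm : Measurable (fun y => G (y - x) ^ 2) :=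
        (hG.comp (measurable_id.sub measurable_const)).pow_const 2
      simp only [mul_pow]
      rw [lintegral_const_mul _ hm]
      congr 1
      exact lintegral_sub_right_eq_self (fun y => G y ^ 2) x
    rw [h2, ENNReal.mul_rpow_of_nonneg _ _ (by norm_num)] at h
    refine h.trans (le_of_eq ?_)
    ring
  refine (add_le_add (add_le_add b1 (tri_two μ hk hM hF hG hH))
    (tri_two μ hk hM hG hF hH)).trans (le_of_eq ?_)
  ring

end L2

section Kernel

/-- The bracket `1 + |x|`. -/
noncomputable def jb (x : ℝ) : ℝ := 1 + |x|

lemma jb_ge (x : ℝ) : 1 ≤ jb x := by unfold jb; linarith [abs_nonneg x]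
lemma jb_pos (x : ℝ) : 0 < jb x := by linarith [jb_ge x]
lemma jb_continuous : Continuous jb := by unfold jb; fun_prop

/-- Decaying weight. -/
noncomputable def pw (b x : ℝ) : ℝ≥0∞ := ENNReal.ofReal (jb x ^ (-(2 * b)))

lemma jb_rpow_continuous (r : ℝ) : Continuous (fun x => jb x ^ r) :=
  jb_continuous.rpow_const fun x => Or.inl (jb_pos x).ne'

lemma pw_measurable (b : ℝ) : Measurable (pw b) :=
  (jb_rpow_continuous _).measurable.ennreal_ofReal

lemma pw_le_one {b : ℝ} (hb : 0 ≤ b) (x : ℝ) : pw b x ≤ 1 := by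
  unfold pw
  rw [← ENNReal.ofReal_one]
  exact ENNReal.ofReal_le_ofReal (Real.rpow_le_one_of_one_le_of_nonpos (jb_ge x) (by linarith))

lemma pw_finite {b : ℝ} (hb : 1/2 < b) : ∫⁻ x, pw b x ≠ ⊤ := by
  have := finite_integral_one_add_norm (E := ℝ) (μ := volume) (r := 2 * b)
    (by simp; linarith)
  exact this.ne

lemma pw_conv {b : ℝ} (hb : 0 < b) (α β : ℝ) :
    ∫⁻ t, pw b (t - α) * pw b (β - t) ≤
      ENNReal.ofReal (2 ^ (2 * b)) * (2 * ∫⁻ x, pw b x) * pw b (β - α) := by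
  have hpt : ∀ t, pw b (t - α) * pw b (β - t) ≤
      ENNReal.ofReal (2 ^ (2 * b)) * pw b (β - α) * (pw b (t - α) + pw b (β - t)) := by
    intro t
    unfold pw
    set A := jb (t - α) with hA
    set B := jb (β - t) with hB
    set D := jb (β - α) with hD
    have hA1 : 0 < A := jb_pos _
    have hB1 : 0 < B := jb_pos _
    have hD1 : 0 < D := jb_pos _
    have hDAB : D ≤ A + B := by
      have := abs_add_le (t - α) (β - t)
      rw [show t - α + (β - t) = β - α by ring] at this
      simp only [hA, hB, hD, jb]
      linarith
    rw [← ENNReal.ofReal_add (by positivity) (by positivity), ← ENNReal.ofReal_mul (by positivity),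
      ← ENNReal.ofReal_mul (by positivity), ← ENNReal.ofReal_mul (by positivity)]
    apply ENNReal.ofReal_le_ofReal
    have key : ∀ X Y : ℝ, 0 < X → 0 < Y → D ≤ X + Y → X ≤ Y →
        X ^ (-(2 * b)) * Y ^ (-(2 * b)) ≤
          2 ^ (2 * b) * D ^ (-(2 * b)) * (X ^ (-(2 * b)) + Y ^ (-(2 * b))) := by
      intro X Y hX hY h1 h2
      have h3 : Y ^ (-(2 * b)) ≤ 2 ^ (2 * b) * D ^ (-(2 * b)) := by
        have h4 : Y ^ (-(2 * b)) ≤ (D / 2) ^ (-(2 * b)) :=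
          Real.rpow_le_rpow_of_nonpos (by positivity) (by linarith) (by linarith)
        rw [Real.div_rpow hD1.le (by norm_num), Real.rpow_neg (by norm_num : (0:ℝ) ≤ 2),
          div_inv_eq_mul] at h4
        linarith
      have h5 : 0 < X ^ (-(2 * b)) := by positivity
      have h6 : 0 < Y ^ (-(2 * b)) := by positivity
      have h7 : 0 < 2 ^ (2 * b) * D ^ (-(2 * b)) := by positivity
      nlinarith
    rcases le_total A B with h | h
    · exact key A B hA1 hB1 hDAB h
    · have := key B A hB1 hA1 (by linarith) h
      linarith
  have m1 : Measurable (fun t => pw b (t - α)) :=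
    (pw_measurable b).comp (measurable_id.sub_const α)
  have m2 : Measurable (fun t => pw b (β - t)) :=
    (pw_measurable b).comp (measurable_id.const_sub β)
  have m3 : Measurable (fun t => pw b (t - α) + pw b (β - t)) := m1.add m2
  refine (lintegral_mono hpt).trans (le_of_eq ?_)
  rw [lintegral_const_mul _ m3, lintegral_add_left m1,
    lintegral_sub_right_eq_self (fun t => pw b t) α, lintegral_sub_left_eq_self (fun t => pw b t) β]
  ring

lemma phase_int (a : ℝ) (ha : a ≠ 0) (b τ ξ : ℝ) :
    ∫⁻ x, ENNReal.ofReal (|ξ| * |2 * x - ξ|) * pw b (τ - a * x ^ 3 - a * (ξ - x) ^ 3) ≤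
      ENNReal.ofReal (3 * |a|)⁻¹ * (2 * ∫⁻ x, pw b x) := by
  by_cases hξ : ξ = 0
  · simp [hξ]
  set φ : ℝ → ℝ := fun x => τ - a * x ^ 3 - a * (ξ - x) ^ 3 with hφ
  set φ' : ℝ → ℝ := fun x => -(3 * a * (ξ * (2 * x - ξ))) with hφ'
  have hd : ∀ x, HasDerivAt φ (φ' x) x := by
    intro x
    have h1 : HasDerivAt (fun x : ℝ => x ^ 3) (3 * x ^ 2) x := by
      simpa using hasDerivAt_pow 3 x
    have h2 : HasDerivAt (fun x : ℝ => (ξ - x) ^ 3) (3 * (ξ - x) ^ 2 * (-1)) x := by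
      simpa using ((hasDerivAt_id x).const_sub ξ).fun_pow 3
    have h3 := ((h1.const_mul a).const_sub τ).sub (h2.const_mul a)
    convert! h3 using 1
    simp only [hφ']
    ring
  have hinj : ∀ x y, φ x = φ y → (x - y) * (x + y - ξ) = 0 := by
    intro x y h
    have : 3 * a * ξ * ((x - y) * (x + y - ξ)) = 0 := by
      simp only [hφ] at h
      linarith
    have h3 : 3 * a * ξ ≠ 0 := by positivity
    exact (mul_eq_zero.mp this).resolve_left h3
  have hpt : ∀ x, ENNReal.ofReal (|ξ| * |2 * x - ξ|) * pw b (φ x) =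
      ENNReal.ofReal (3 * |a|)⁻¹ * (ENNReal.ofReal |φ' x| * pw b (φ x)) := by
    intro x
    rw [← mul_assoc, ← ENNReal.ofReal_mul (by positivity)]
    congr 2
    simp only [hφ', abs_neg, abs_mul]
    have : |a| ≠ 0 := by simpa using ha
    rw [abs_of_pos (by norm_num : (0:ℝ) < 3)]
    field_simp
  have hφc : Continuous φ := by simp only [hφ]; fun_prop
  have hφ'c : Continuous φ' := by simp only [hφ']; fun_prop
  have hm : Measurable (fun x => ENNReal.ofReal |φ' x| * pw b (φ x)) :=
    (hφ'c.abs.measurable.ennreal_ofReal).mul ((pw_measurable b).comp hφc.measurable)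
  change ∫⁻ x, ENNReal.ofReal (|ξ| * |2 * x - ξ|) * pw b (φ x) ≤ _
  simp_rw [hpt]
  rw [lintegral_const_mul _ hm]
  gcongr
  have hs : MeasurableSet (Iio (ξ / 2)) := measurableSet_Iio
  rw [← lintegral_add_compl _ hs, two_mul, compl_Iio]
  refine add_le_add ?_ ?_
  · rw [← lintegral_image_eq_lintegral_abs_deriv_mul hs
      (fun x _ => (hd x).hasDerivWithinAt) ?_ (pw b)]
    · exact setLIntegral_le_lintegral _ _
    · intro x hx y hy h
      simp only [mem_Iio] at hx hy
      rcases mul_eq_zero.mp (hinj x y h) with h | h <;> linarith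
  · rw [← lintegral_image_eq_lintegral_abs_deriv_mul measurableSet_Ici
      (fun x _ => (hd x).hasDerivWithinAt) ?_ (pw b)]
    · exact setLIntegral_le_lintegral _ _
    · intro x hx y hy h
      simp only [mem_Ici] at hx hy
      rcases mul_eq_zero.mp (hinj x y h) with h | h <;> linarith

/-- Frequency weight. -/
noncomputable def fw (ξ x : ℝ) : ℝ := |ξ| ^ (1/2 : ℝ) * |2 * x - ξ| ^ (1/2 : ℝ) + |ξ| ^ (1/4 : ℝ)

lemma fw_nonneg (ξ x : ℝ) : 0 ≤ fw ξ x := by unfold fw; positivity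

/-- Modulation. -/
def md (a : ℝ) (z : ℝ × ℝ) : ℝ := z.1 - a * z.2 ^ 3

/-- The good kernel. -/
noncomputable def kk (a b : ℝ) (z z₁ : ℝ × ℝ) : ℝ :=
  fw z.2 z₁.2 * (jb (md a z₁) ^ (-b) * jb (md a (z - z₁)) ^ (-b))

lemma kk_nonneg (a b : ℝ) (z z₁ : ℝ × ℝ) : 0 ≤ kk a b z z₁ := by
  have h1 := jb_pos (md a z₁)
  have h2 := jb_pos (md a (z - z₁))
  have := fw_nonneg z.2 z₁.2
  unfold kk
  positivity

lemma kk_measurable (a b : ℝ) :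
    Measurable (Function.uncurry fun z z₁ => ENNReal.ofReal (kk a b z z₁)) := by
  apply Measurable.ennreal_ofReal
  apply Continuous.measurable
  have h := jb_rpow_continuous (-b)
  have h1 : Continuous (fun x : ℝ => |x| ^ (1/2 : ℝ)) :=
    continuous_abs.rpow_const fun x => Or.inr (by norm_num)
  have h2 : Continuous (fun x : ℝ => |x| ^ (1/4 : ℝ)) :=
    continuous_abs.rpow_const fun x => Or.inr (by norm_num)
  have h3 : Continuous (md a) := by unfold md; fun_prop
  unfold kk fw
  have e1 : Continuous (fun p : (ℝ × ℝ) × (ℝ × ℝ) => jb (md a p.2) ^ (-b)) :=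
    h.comp (h3.comp continuous_snd)
  have e2 : Continuous (fun p : (ℝ × ℝ) × (ℝ × ℝ) => jb (md a (p.1 - p.2)) ^ (-b)) :=
    h.comp (h3.comp (continuous_fst.sub continuous_snd))
  have e3 : Continuous (fun p : (ℝ × ℝ) × (ℝ × ℝ) => |p.1.2| ^ (1/2 : ℝ)) :=
    h1.comp (continuous_snd.comp continuous_fst)
  have e4 : Continuous (fun p : (ℝ × ℝ) × (ℝ × ℝ) => |p.1.2| ^ (1/4 : ℝ)) :=
    h2.comp (continuous_snd.comp continuous_fst)
  have e5 : Continuous (fun p : (ℝ × ℝ) × (ℝ × ℝ) => |2 * p.2.2 - p.1.2| ^ (1/2 : ℝ)) :=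
    h1.comp (by fun_prop : Continuous (fun p : (ℝ × ℝ) × (ℝ × ℝ) => 2 * p.2.2 - p.1.2))
  exact ((e3.mul e5).add e4).mul (e1.mul e2)

lemma fw_sq (ξ x : ℝ) : ENNReal.ofReal (fw ξ x) ^ 2 ≤
    4 * ENNReal.ofReal (|ξ| * |2 * x - ξ|) +
      2 * (Icc (ξ / 2 - |ξ| ^ (-(1/2) : ℝ) / 2) (ξ / 2 + |ξ| ^ (-(1/2) : ℝ) / 2)).indicator
        (fun _ => ENNReal.ofReal (|ξ| ^ (1/2 : ℝ))) x := by
  by_cases hξ : ξ = 0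
  · simp [fw, hξ]
  have hξ' : 0 < |ξ| := abs_pos.mpr hξ
  rw [← ENNReal.ofReal_pow (fw_nonneg _ _)]
  set P := |ξ| ^ (1/2 : ℝ) with hP
  have hP0 : 0 < P := by positivity
  have hPP : P * P = |ξ| := by
    rw [hP, ← Real.rpow_add hξ']; norm_num
  have hPi : |ξ| ^ (-(1/2) : ℝ) = P⁻¹ := Real.rpow_neg hξ'.le _
  have hq : (|ξ| ^ (1/4 : ℝ)) ^ 2 = P := by
    rw [hP, ← Real.rpow_natCast, ← Real.rpow_mul hξ'.le]; norm_num
  set y := |2 * x - ξ| with hy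
  have hy0 : 0 ≤ y := abs_nonneg _
  have hyy : (y ^ (1/2 : ℝ)) ^ 2 = y := by
    rw [← Real.rpow_natCast, ← Real.rpow_mul hy0]; norm_num
  have hf : fw ξ x ^ 2 ≤ 2 * (|ξ| * y) + 2 * P := by
    have : fw ξ x = P * y ^ (1/2 : ℝ) + |ξ| ^ (1/4 : ℝ) := rfl
    rw [this]
    have h1 : (P * y ^ (1/2 : ℝ)) ^ 2 = |ξ| * y := by rw [mul_pow, hyy, sq, hPP]
    nlinarith [sq_nonneg (P * y ^ (1/2 : ℝ) - |ξ| ^ (1/4 : ℝ))]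
  rw [hPi]
  have e4 : (4 : ℝ≥0∞) = ENNReal.ofReal 4 := by simp
  have e2 : (2 : ℝ≥0∞) = ENNReal.ofReal 2 := by simp
  by_cases hx : x ∈ Icc (ξ / 2 - P⁻¹ / 2) (ξ / 2 + P⁻¹ / 2)
  · rw [indicator_of_mem hx, e4, e2, ← ENNReal.ofReal_mul (by norm_num),
      ← ENNReal.ofReal_mul (by norm_num), ← ENNReal.ofReal_add (by positivity) (by positivity)]
    apply ENNReal.ofReal_le_ofReal
    nlinarith [mul_nonneg hξ'.le hy0]
  · rw [indicator_of_notMem hx, e4, mul_zero, add_zero, ← ENNReal.ofReal_mul (by norm_num)]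
    apply ENNReal.ofReal_le_ofReal
    have h2 : P⁻¹ < y := by
      by_contra h
      apply hx
      have h3 : |2 * x - ξ| ≤ P⁻¹ := not_lt.mp h
      have := abs_le.mp h3
      constructor <;> linarith [this.1, this.2]
    have h3 : 1 < P * y := by
      have := mul_lt_mul_of_pos_left h2 hP0
      rwa [mul_inv_cancel₀ hP0.ne'] at this
    have h4 : P ≤ |ξ| * y := by
      rw [← hPP]; nlinarith
    linarith

lemma kk_sq {a b : ℝ} (ha : a ≠ 0) (hb : 1/2 < b) :
    ∃ M : ℝ≥0∞, M ≠ ⊤ ∧ ∀ z : ℝ × ℝ, ∫⁻ z₁, ENNReal.ofReal (kk a b z z₁) ^ 2 ≤ M := by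
  set J := ∫⁻ x, pw b x with hJ
  have hJf : J ≠ ⊤ := pw_finite hb
  set C₁ := ENNReal.ofReal (2 ^ (2 * b)) * (2 * J) with hC₁
  refine ⟨C₁ * (4 * (ENNReal.ofReal (3 * |a|)⁻¹ * (2 * J)) + 2), ?_, ?_⟩
  · have : C₁ ≠ ⊤ := by rw [hC₁]; finiteness
    finiteness
  rintro ⟨τ, ξ⟩
  have hm : Measurable (fun z₁ : ℝ × ℝ => ENNReal.ofReal (kk a b (τ, ξ) z₁) ^ 2) :=
    ((kk_measurable a b).comp measurable_prodMk_left).pow_const 2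
  rw [Measure.volume_eq_prod, lintegral_prod_symm' _ hm]
  have hsq : ∀ x t, ENNReal.ofReal (kk a b (τ, ξ) (t, x)) ^ 2 =
      ENNReal.ofReal (fw ξ x) ^ 2 * (pw b (t - a * x ^ 3) * pw b ((τ - a * (ξ - x) ^ 3) - t)) := by
    intro x t
    have e : ∀ y, ENNReal.ofReal (jb y ^ (-b)) ^ 2 = pw b y := by
      intro y
      have := jb_pos y
      rw [← ENNReal.ofReal_pow (by positivity), pw, ← Real.rpow_natCast, ← Real.rpow_mul this.le]
      congr 2
      push_cast; ring
    have p1 := jb_pos (md a (t, x))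
    have p2 := jb_pos (md a ((τ, ξ) - (t, x)))
    unfold kk
    rw [ENNReal.ofReal_mul (fw_nonneg _ _), ENNReal.ofReal_mul (by positivity), mul_pow, mul_pow,
      e, e]
    simp only [md, Prod.mk_sub_mk]
    congr 3
    ring
  have hinner : ∀ x, ∫⁻ t, ENNReal.ofReal (kk a b (τ, ξ) (t, x)) ^ 2 ≤
      C₁ * (4 * (ENNReal.ofReal (|ξ| * |2 * x - ξ|) * pw b (τ - a * x ^ 3 - a * (ξ - x) ^ 3)) +
       2 * (Icc (ξ / 2 - |ξ| ^ (-(1/2) : ℝ) / 2) (ξ / 2 + |ξ| ^ (-(1/2) : ℝ) / 2)).indicator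
        (fun _ => ENNReal.ofReal (|ξ| ^ (1/2 : ℝ))) x) := by
    intro x
    simp_rw [hsq]
    rw [lintegral_const_mul]
    · have h1 := pw_conv (b := b) (by linarith) (a * x ^ 3) (τ - a * (ξ - x) ^ 3)
      have h2 := fw_sq ξ x
      rw [show τ - a * (ξ - x) ^ 3 - a * x ^ 3 = τ - a * x ^ 3 - a * (ξ - x) ^ 3 by ring] at h1
      set p := pw b (τ - a * x ^ 3 - a * (ξ - x) ^ 3)
      have hp1 : p ≤ 1 := pw_le_one (by linarith) _
      set I := (Icc (ξ / 2 - |ξ| ^ (-(1/2) : ℝ) / 2) (ξ / 2 + |ξ| ^ (-(1/2) : ℝ) / 2)).indicator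
        (fun _ => ENNReal.ofReal (|ξ| ^ (1/2 : ℝ))) x
      refine (mul_le_mul' h2 h1).trans ?_
      calc (4 * ENNReal.ofReal (|ξ| * |2 * x - ξ|) + 2 * I) * (C₁ * p)
          = C₁ * (4 * (ENNReal.ofReal (|ξ| * |2 * x - ξ|) * p) + 2 * I * p) := by ring
        _ ≤ C₁ * (4 * (ENNReal.ofReal (|ξ| * |2 * x - ξ|) * p) + 2 * I * 1) := by gcongr
        _ = _ := by rw [mul_one]
    · exact ((pw_measurable b).comp (measurable_id.sub_const _)).mul
        ((pw_measurable b).comp (measurable_id.const_sub _))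
  refine (lintegral_mono hinner).trans ?_
  have mA : Measurable (fun x => ENNReal.ofReal (|ξ| * |2 * x - ξ|) *
      pw b (τ - a * x ^ 3 - a * (ξ - x) ^ 3)) := by
    have c1 : Continuous (fun x : ℝ => |ξ| * |2 * x - ξ|) := by fun_prop
    have c2 : Continuous (fun x : ℝ => τ - a * x ^ 3 - a * (ξ - x) ^ 3) := by fun_prop
    exact c1.measurable.ennreal_ofReal.mul ((pw_measurable b).comp c2.measurable)
  have mA' : Measurable (fun x => 4 * (ENNReal.ofReal (|ξ| * |2 * x - ξ|) *
      pw b (τ - a * x ^ 3 - a * (ξ - x) ^ 3))) := mA.const_mul 4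
  have mI : Measurable (fun x =>
      (Icc (ξ / 2 - |ξ| ^ (-(1/2) : ℝ) / 2) (ξ / 2 + |ξ| ^ (-(1/2) : ℝ) / 2)).indicator
        (fun _ => ENNReal.ofReal (|ξ| ^ (1/2 : ℝ))) x) :=
    measurable_const.indicator measurableSet_Icc
  have mI' : Measurable (fun x => 2 *
      (Icc (ξ / 2 - |ξ| ^ (-(1/2) : ℝ) / 2) (ξ / 2 + |ξ| ^ (-(1/2) : ℝ) / 2)).indicator
        (fun _ => ENNReal.ofReal (|ξ| ^ (1/2 : ℝ))) x) := mI.const_mul 2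
  rw [lintegral_const_mul _ (by exact mA'.add mI'), lintegral_add_left mA', lintegral_const_mul _ mA,
    lintegral_const_mul _ mI, lintegral_indicator_const measurableSet_Icc, Real.volume_Icc]
  have hfin : ENNReal.ofReal (|ξ| ^ (1/2 : ℝ)) * ENNReal.ofReal (ξ / 2 + |ξ| ^ (-(1/2) : ℝ) / 2 -
      (ξ / 2 - |ξ| ^ (-(1/2) : ℝ) / 2)) ≤ 1 := by
    rw [← ENNReal.ofReal_mul (by positivity), ← ENNReal.ofReal_one]
    apply ENNReal.ofReal_le_ofReal
    rw [show ξ / 2 + |ξ| ^ (-(1/2) : ℝ) / 2 - (ξ / 2 - |ξ| ^ (-(1/2) : ℝ) / 2) =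
      |ξ| ^ (-(1/2) : ℝ) by ring]
    by_cases hξ : ξ = 0
    · simp [hξ]
    · rw [← Real.rpow_add (abs_pos.mpr hξ)]; norm_num
  gcongr
  · exact phase_int a ha b τ ξ
  · calc 2 * _ ≤ 2 * (1 : ℝ≥0∞) := by gcongr
      _ = 2 := mul_one _

end Kernel

section Multiplier

lemma rpow_scale {c x r : ℝ} (hc : 1 ≤ c) (hx : 0 ≤ x) (hr1 : r ≤ 1) :
    (c * x) ^ r ≤ c * x ^ r := by
  rw [Real.mul_rpow (by linarith) hx]
  have : c ^ r ≤ c ^ (1:ℝ) := Real.rpow_le_rpow_of_exponent_le hc hr1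
  rw [Real.rpow_one] at this
  gcongr

lemma rpow_scale_div {c x y r : ℝ} (hc : 1 ≤ c) (hx : 0 ≤ x) (hr : 0 ≤ r) (hr1 : r ≤ 1)
    (hxy : x ≤ c * y) : x ^ r ≤ c * y ^ r := by
  have hy : 0 ≤ y := by
    by_contra h
    push Not at h
    nlinarith
  exact (Real.rpow_le_rpow hx hxy hr).trans (rpow_scale hc hy hr1)

/-- The frequency multiplier. -/
noncomputable def mu (ρ x₀ x₁ x₂ : ℝ) : ℝ :=
  x₀ * (1 + x₀) ^ (-ρ) * ((1 + x₁) ^ ρ * (1 + x₂) ^ ρ)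

lemma mu_comparable {δ N x₀ x₁ x₂ y : ℝ} (hδ : 0 < δ) (hδ' : δ ≤ 1/48) (hN : 1 ≤ N)
    (h0 : N / 4 ≤ x₀) (h0' : x₀ ≤ 2 * N) (h1 : N / 4 ≤ x₁) (h1' : x₁ ≤ 2 * N)
    (h2 : N / 4 ≤ x₂) (h2' : x₂ ≤ 2 * N) (hy : N / 4 ≤ y) :
    mu (3/4 - 6 * δ) x₀ x₁ x₂ ≤
      18432 * ((1 + x₀ * x₁ * x₂) ^ (1/2 - 2 * δ) * y ^ (1/4 : ℝ)) := by
  set ρ := 3/4 - 6 * δ with hρ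
  set θ := 1/2 - 2 * δ with hθ
  have N0 : 0 < N := by linarith
  have e1 : (1 + x₁) ^ ρ ≤ 3 * N ^ ρ :=
    rpow_scale_div (by norm_num) (by linarith) (by linarith) (by linarith) (by linarith)
  have e2 : (1 + x₂) ^ ρ ≤ 3 * N ^ ρ :=
    rpow_scale_div (by norm_num) (by linarith) (by linarith) (by linarith) (by linarith)
  have e0 : N ^ ρ ≤ 4 * (1 + x₀) ^ ρ :=
    rpow_scale_div (by norm_num) (by linarith) (by linarith) (by linarith) (by linarith)
  have p0 : 0 < (1 + x₀) ^ ρ := Real.rpow_pos_of_pos (by linarith) _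
  have pN : 0 < N ^ ρ := by positivity
  have e0' : (1 + x₀) ^ (-ρ) ≤ 4 * (N ^ ρ)⁻¹ := by
    rw [Real.rpow_neg (by linarith), ← div_eq_mul_inv, inv_eq_one_div,
      div_le_div_iff₀ p0 pN]
    linarith
  have hR : N ^ (3:ℕ) ≤ 64 * (1 + x₀ * x₁ * x₂) := by
    have q0 : 0 ≤ N / 4 := by linarith
    have := mul_le_mul (mul_le_mul h0 h1 q0 (by linarith)) h2 q0 (by nlinarith)
    nlinarith
  have eR : (N ^ (3:ℕ)) ^ θ ≤ 64 * (1 + x₀ * x₁ * x₂) ^ θ :=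
    rpow_scale_div (by norm_num) (by positivity) (by linarith) (by linarith) hR
  have ey : N ^ (1/4 : ℝ) ≤ 4 * y ^ (1/4 : ℝ) :=
    rpow_scale_div (by norm_num) (by linarith) (by norm_num) (by norm_num) (by linarith)
  have pR : 0 ≤ (1 + x₀ * x₁ * x₂) ^ θ := by
    apply Real.rpow_nonneg
    have : 0 ≤ N ^ (3:ℕ) := by positivity
    linarith
  have eN : N * N ^ ρ = (N ^ (3:ℕ)) ^ θ * N ^ (1/4 : ℝ) := by
    rw [← Real.rpow_natCast, ← Real.rpow_mul N0.le, ← Real.rpow_add N0]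
    nth_rw 1 [← Real.rpow_one N]
    rw [← Real.rpow_add N0]
    congr 1
    push_cast
    linarith
  have a1 : x₀ * (1 + x₀) ^ (-ρ) ≤ (2 * N) * (4 * (N ^ ρ)⁻¹) :=
    mul_le_mul h0' e0' (Real.rpow_nonneg (by linarith) _) (by linarith)
  have a2 : (1 + x₁) ^ ρ * (1 + x₂) ^ ρ ≤ (3 * N ^ ρ) * (3 * N ^ ρ) :=
    mul_le_mul e1 e2 (Real.rpow_nonneg (by linarith) _) (by positivity)
  have a3 := mul_le_mul a1 a2
    (mul_nonneg (Real.rpow_nonneg (by linarith) _) (Real.rpow_nonneg (by linarith) _))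
    (by positivity)
  have a4 : (2 * N) * (4 * (N ^ ρ)⁻¹) * ((3 * N ^ ρ) * (3 * N ^ ρ)) = 72 * (N * N ^ ρ) := by
    field_simp
    norm_num
  have a5 := mul_le_mul eR ey (by positivity) (by linarith)
  unfold mu
  rw [a4, eN] at a3
  linarith

lemma mu_large {ρ κ x₀ x₁ x₂ : ℝ} (hρ : 0 ≤ ρ) (hρ1 : ρ ≤ 1) (hκ : 0 ≤ κ) (hκρ : κ ≤ ρ)
    (h0 : 0 ≤ x₀) (hκ1 : κ < 1) (h1 : 1 ≤ x₁) (h2 : 1 ≤ x₂) :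
    mu ρ x₀ x₁ x₂ ≤ 4 * (x₀ ^ (1 - κ) * (x₁ * x₂) ^ ρ) := by
  have e1 : (1 + x₁) ^ ρ ≤ 2 * x₁ ^ ρ :=
    rpow_scale_div (by norm_num) (by linarith) hρ hρ1 (by linarith)
  have e2 : (1 + x₂) ^ ρ ≤ 2 * x₂ ^ ρ :=
    rpow_scale_div (by norm_num) (by linarith) hρ hρ1 (by linarith)
  have e0 : x₀ * (1 + x₀) ^ (-ρ) ≤ x₀ ^ (1 - κ) := by
    have q : (1 + x₀) ^ (-ρ) ≤ (1 + x₀) ^ (-κ) :=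
      Real.rpow_le_rpow_of_exponent_le (by linarith) (by linarith)
    rcases h0.eq_or_lt with h | h
    · rw [← h, zero_mul, Real.zero_rpow (by linarith)]
    · have q2 : (1 + x₀) ^ (-κ) ≤ x₀ ^ (-κ) :=
        Real.rpow_le_rpow_of_nonpos h (by linarith) (by linarith)
      calc x₀ * (1 + x₀) ^ (-ρ) ≤ x₀ * x₀ ^ (-κ) := by
            have := q.trans q2
            gcongr
        _ = x₀ ^ (1 - κ) := by
            nth_rw 1 [← Real.rpow_one x₀]
            rw [← Real.rpow_add h]
            rfl
  have a2 : (1 + x₁) ^ ρ * (1 + x₂) ^ ρ ≤ (2 * x₁ ^ ρ) * (2 * x₂ ^ ρ) :=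
    mul_le_mul e1 e2 (Real.rpow_nonneg (by linarith) _) (by positivity)
  have a3 := mul_le_mul e0 a2
    (mul_nonneg (Real.rpow_nonneg (by linarith) _) (Real.rpow_nonneg (by linarith) _))
    (by positivity)
  unfold mu
  rw [Real.mul_rpow (by linarith) (by linarith)]
  linarith

lemma mu_small {ρ ξ ξ₁ ξ₂ : ℝ} (hρ : 0 ≤ ρ) (hρ1 : ρ ≤ 1) (h : ξ = ξ₁ + ξ₂)
    (hsm : |ξ₁| < 1 ∨ |ξ₂| < 1) : mu ρ |ξ| |ξ₁| |ξ₂| ≤ 16 * fw ξ ξ₁ := by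
  have n0 := abs_nonneg ξ
  have n1 := abs_nonneg ξ₁
  have n2 := abs_nonneg ξ₂
  have t1 : |ξ₁| ≤ |ξ| + |ξ₂| := by
    have := abs_sub ξ ξ₂
    rwa [h, add_sub_cancel_right, ← h] at this
  have t2 : |ξ₂| ≤ |ξ| + |ξ₁| := by
    have := abs_sub ξ ξ₁
    rwa [h, add_sub_cancel_left, ← h] at this
  have hprod : (1 + |ξ₁|) * (1 + |ξ₂|) ≤ 4 * (1 + |ξ|) := by
    rcases hsm with h' | h'
    · nlinarith
    · nlinarith
  have e1 : ((1 + |ξ₁|) * (1 + |ξ₂|)) ^ ρ ≤ 4 * (1 + |ξ|) ^ ρ :=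
    rpow_scale_div (by norm_num) (by positivity) hρ hρ1 hprod
  have e2 : mu ρ |ξ| |ξ₁| |ξ₂| ≤ 4 * |ξ| := by
    unfold mu
    rw [← Real.mul_rpow (by positivity) (by positivity), Real.rpow_neg (by positivity)]
    have p : 0 < (1 + |ξ|) ^ ρ := by positivity
    calc |ξ| * ((1 + |ξ|) ^ ρ)⁻¹ * ((1 + |ξ₁|) * (1 + |ξ₂|)) ^ ρ
        ≤ |ξ| * ((1 + |ξ|) ^ ρ)⁻¹ * (4 * (1 + |ξ|) ^ ρ) := by gcongr
      _ = 4 * |ξ| := by field_simp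
  have e3 : |ξ| ≤ 4 * fw ξ ξ₁ := by
    unfold fw
    have p1 : 0 ≤ |ξ| ^ (1/2 : ℝ) * |2 * ξ₁ - ξ| ^ (1/2 : ℝ) := by positivity
    have p2 : 0 ≤ |ξ| ^ (1/4 : ℝ) := by positivity
    rcases n0.eq_or_lt with z | z
    · linarith
    rcases le_total |ξ| 4 with h4 | h4
    · have : |ξ| ≤ 4 * |ξ| ^ (1/4 : ℝ) := by
        have q : |ξ| ^ (3/4 : ℝ) ≤ 4 := by
          calc |ξ| ^ (3/4 : ℝ) ≤ 4 ^ (3/4 : ℝ) := by gcongr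
            _ ≤ 4 ^ (1 : ℝ) := Real.rpow_le_rpow_of_exponent_le (by norm_num) (by norm_num)
            _ = 4 := Real.rpow_one _
        have q2 : |ξ| = |ξ| ^ (3/4 : ℝ) * |ξ| ^ (1/4 : ℝ) := by
          rw [← Real.rpow_add z]; norm_num
        calc |ξ| = |ξ| ^ (3/4 : ℝ) * |ξ| ^ (1/4 : ℝ) := q2
          _ ≤ 4 * |ξ| ^ (1/4 : ℝ) := by gcongr
      linarith
    · have hD : |ξ| ≤ 2 * |2 * ξ₁ - ξ| := by
        rcases hsm with h' | h'
        · have : |ξ| ≤ |2 * ξ₁ - ξ| + 2 * |ξ₁| := by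
            have := abs_sub (2 * ξ₁) (2 * ξ₁ - ξ)
            rw [sub_sub_cancel, abs_mul, abs_two] at this
            linarith
          linarith
        · have : |ξ| ≤ |2 * ξ₁ - ξ| + 2 * |ξ₂| := by
            have := abs_add_le (2 * ξ₁ - ξ) (2 * ξ₂)
            rw [abs_mul, abs_two, show 2 * ξ₁ - ξ + 2 * ξ₂ = ξ by rw [h]; ring] at this
            linarith
          linarith
      have q : |ξ| ^ (1/2 : ℝ) ≤ 2 * |2 * ξ₁ - ξ| ^ (1/2 : ℝ) :=
        rpow_scale_div (by norm_num) n0 (by norm_num) (by norm_num) hD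
      have q2 : |ξ| = |ξ| ^ (1/2 : ℝ) * |ξ| ^ (1/2 : ℝ) := by
        rw [← Real.rpow_add z]; norm_num
      have : |ξ| ≤ |ξ| ^ (1/2 : ℝ) * (2 * |2 * ξ₁ - ξ| ^ (1/2 : ℝ)) := by
        calc |ξ| = |ξ| ^ (1/2 : ℝ) * |ξ| ^ (1/2 : ℝ) := q2
          _ ≤ _ := by gcongr
      linarith
  linarith

lemma mu_Q0 {δ ξ ξ₁ ξ₂ : ℝ} (hδ : 0 < δ) (hδ' : δ ≤ 1/48) (h : ξ = ξ₁ + ξ₂)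
    (h1 : 1 ≤ |ξ₁|) (h2 : 1 ≤ |ξ₂|) :
    mu (3/4 - 6 * δ) |ξ| |ξ₁| |ξ₂| ≤
      18432 * ((1 + |ξ| * |ξ₁| * |ξ₂|) ^ (1/2 - 2 * δ) * fw ξ ξ₁) := by
  set N := max |ξ₁| |ξ₂| with hN
  have N1 : |ξ₁| ≤ N := le_max_left _ _
  have N2 : |ξ₂| ≤ N := le_max_right _ _
  have n0 := abs_nonneg ξ
  have pR : 0 ≤ (1 + |ξ| * |ξ₁| * |ξ₂|) ^ (1/2 - 2 * δ) := by positivity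
  have x0N : |ξ| ≤ 2 * N := by
    have := abs_add_le ξ₁ ξ₂
    rw [← h] at this; linarith
  have p1 : 0 ≤ |ξ| ^ (1/2 : ℝ) * |2 * ξ₁ - ξ| ^ (1/2 : ℝ) := by positivity
  have p2 : 0 ≤ |ξ| ^ (1/4 : ℝ) := by positivity
  rcases le_or_gt N (2 * |2 * ξ₁ - ξ|) with hD | hD
  · have m1 := mu_large (ρ := 3/4 - 6 * δ) (κ := 2 * δ) (by linarith) (by linarith) (by linarith)
      (by linarith) n0 (by linarith) h1 h2
    have q1 : N ^ (1/2 : ℝ) ≤ 2 * |2 * ξ₁ - ξ| ^ (1/2 : ℝ) :=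
      rpow_scale_div (by norm_num) (by linarith) (by norm_num) (by norm_num) hD
    have px : 0 < |ξ₁| * |ξ₂| := by nlinarith
    have q2 : (|ξ₁| * |ξ₂|) ^ (3/4 - 6 * δ) ≤ (|ξ₁| * |ξ₂|) ^ (1/2 - 2 * δ) * N ^ (1/2 : ℝ) := by
      rw [show 3/4 - 6 * δ = (1/2 - 2 * δ) + (1/4 - 4 * δ) by ring, Real.rpow_add px]
      gcongr
      calc (|ξ₁| * |ξ₂|) ^ (1/4 - 4 * δ) ≤ (N * N) ^ (1/4 - 4 * δ) := by
            apply Real.rpow_le_rpow px.le _ (by linarith)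
            gcongr
        _ ≤ (N * N) ^ (1/4 : ℝ) :=
            Real.rpow_le_rpow_of_exponent_le (by nlinarith) (by linarith)
        _ = N ^ (1/2 : ℝ) := by
            rw [Real.mul_rpow (by linarith) (by linarith), ← Real.rpow_add (by linarith)]
            norm_num
    have q3 : |ξ| ^ (1 - 2 * δ) = |ξ| ^ (1/2 - 2 * δ) * |ξ| ^ (1/2 : ℝ) := by
      rw [← Real.rpow_add_of_nonneg n0 (by linarith) (by norm_num)]
      congr 1; ring
    have q4 : |ξ| ^ (1/2 - 2 * δ) * (|ξ₁| * |ξ₂|) ^ (1/2 - 2 * δ) ≤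
        (1 + |ξ| * |ξ₁| * |ξ₂|) ^ (1/2 - 2 * δ) := by
      rw [← Real.mul_rpow n0 px.le]
      apply Real.rpow_le_rpow (by positivity) (by linarith) (by linarith)
    have q5 : |ξ| ^ (1 - 2 * δ) * (|ξ₁| * |ξ₂|) ^ (3/4 - 6 * δ) ≤
        (1 + |ξ| * |ξ₁| * |ξ₂|) ^ (1/2 - 2 * δ) *
          (|ξ| ^ (1/2 : ℝ) * (2 * |2 * ξ₁ - ξ| ^ (1/2 : ℝ))) := by
      calc |ξ| ^ (1 - 2 * δ) * (|ξ₁| * |ξ₂|) ^ (3/4 - 6 * δ)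
          ≤ |ξ| ^ (1 - 2 * δ) * ((|ξ₁| * |ξ₂|) ^ (1/2 - 2 * δ) * N ^ (1/2 : ℝ)) := by gcongr
        _ = (|ξ| ^ (1/2 - 2 * δ) * (|ξ₁| * |ξ₂|) ^ (1/2 - 2 * δ)) *
            (|ξ| ^ (1/2 : ℝ) * N ^ (1/2 : ℝ)) := by rw [q3]; ring
        _ ≤ _ := by gcongr
    unfold fw
    have r1 := mul_nonneg pR p1
    have r2 := mul_nonneg pR p2
    linarith
  · have t1 : 2 * |ξ₁| ≤ |2 * ξ₁ - ξ| + |ξ| := by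
      have := abs_add_le (2 * ξ₁ - ξ) ξ
      rwa [sub_add_cancel, abs_mul, abs_two] at this
    have t2 : 2 * |ξ₂| ≤ |2 * ξ₁ - ξ| + |ξ| := by
      have := abs_sub ξ (2 * ξ₁ - ξ)
      rw [show ξ - (2 * ξ₁ - ξ) = 2 * ξ₂ by rw [h]; ring, abs_mul, abs_two] at this
      linarith
    have t3 : |ξ₁| ≤ |2 * ξ₁ - ξ| + |ξ₂| := by
      have := abs_add_le (2 * ξ₁ - ξ) ξ₂
      rwa [show 2 * ξ₁ - ξ + ξ₂ = ξ₁ by rw [h]; ring] at this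
    have t4 : |ξ₂| ≤ |2 * ξ₁ - ξ| + |ξ₁| := by
      have := abs_sub ξ₁ (2 * ξ₁ - ξ)
      rw [show ξ₁ - (2 * ξ₁ - ξ) = ξ₂ by rw [h]; ring] at this
      linarith
    have hm : N = |ξ₁| ∨ N = |ξ₂| := max_choice _ _
    have c0 : N / 4 ≤ |ξ| := by rcases hm with hm | hm <;> linarith
    have c1 : N / 4 ≤ |ξ₁| := by rcases hm with hm | hm <;> linarith
    have c2 : N / 4 ≤ |ξ₂| := by rcases hm with hm | hm <;> linarith
    have := mu_comparable hδ hδ' (by linarith) c0 x0N c1 (by linarith) c2 (by linarith) c0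
    unfold fw
    have r1 := mul_nonneg pR p1
    linarith

lemma mu_Q1 {δ ξ ξ₁ ξ₂ : ℝ} (hδ : 0 < δ) (hδ' : δ ≤ 1/48) (h : ξ = ξ₁ + ξ₂)
    (h1 : 1 ≤ |ξ₁|) (h2 : 1 ≤ |ξ₂|) :
    mu (3/4 - 6 * δ) |ξ| |ξ₁| |ξ₂| ≤
      18432 * ((1 + |ξ| * |ξ₁| * |ξ₂|) ^ (1/2 - 2 * δ) * fw ξ₁ ξ) := by
  set N := max |ξ₁| |ξ₂| with hN
  have N1 : |ξ₁| ≤ N := le_max_left _ _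
  have N2 : |ξ₂| ≤ N := le_max_right _ _
  have n0 := abs_nonneg ξ
  have pR : 0 ≤ (1 + |ξ| * |ξ₁| * |ξ₂|) ^ (1/2 - 2 * δ) := by positivity
  have x0N : |ξ| ≤ 2 * N := by
    have := abs_add_le ξ₁ ξ₂
    rw [← h] at this; linarith
  have p1 : 0 ≤ |ξ₁| ^ (1/2 : ℝ) * |2 * ξ - ξ₁| ^ (1/2 : ℝ) := by positivity
  have p2 : 0 ≤ |ξ₁| ^ (1/4 : ℝ) := by positivity
  rcases le_or_gt N (8 * |2 * ξ - ξ₁|) with hD | hD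
  · have m1 := mu_large (ρ := 3/4 - 6 * δ) (κ := 1/2 + 2 * δ) (by linarith) (by linarith)
      (by linarith) (by linarith) n0 (by linarith) h1 h2
    have q1 : N ^ (1/2 : ℝ) ≤ 8 * |2 * ξ - ξ₁| ^ (1/2 : ℝ) :=
      rpow_scale_div (by norm_num) (by linarith) (by norm_num) (by norm_num) hD
    have px1 : 1 ≤ |ξ₁| * |ξ₂| := by nlinarith
    have px : 0 < |ξ₁| * |ξ₂| := by linarith
    have q2 : (|ξ₁| * |ξ₂|) ^ (3/4 - 6 * δ) ≤
        (|ξ₁| * |ξ₂|) ^ (1/2 - 2 * δ) * (|ξ₁| ^ (1/2 : ℝ) * N ^ (1/2 : ℝ)) := by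
      rw [show 3/4 - 6 * δ = (1/2 - 2 * δ) + (1/4 - 4 * δ) by ring, Real.rpow_add px]
      gcongr
      calc (|ξ₁| * |ξ₂|) ^ (1/4 - 4 * δ) ≤ (|ξ₁| * |ξ₂|) ^ (1/2 : ℝ) :=
            Real.rpow_le_rpow_of_exponent_le px1 (by linarith)
        _ ≤ (|ξ₁| * N) ^ (1/2 : ℝ) := by gcongr
        _ = _ := Real.mul_rpow (by linarith) (by linarith)
    rw [show 1 - (1/2 + 2 * δ) = 1/2 - 2 * δ by ring] at m1
    have q4 : |ξ| ^ (1/2 - 2 * δ) * (|ξ₁| * |ξ₂|) ^ (1/2 - 2 * δ) ≤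
        (1 + |ξ| * |ξ₁| * |ξ₂|) ^ (1/2 - 2 * δ) := by
      rw [← Real.mul_rpow n0 px.le]
      apply Real.rpow_le_rpow (by positivity) (by linarith) (by linarith)
    have q5 : |ξ| ^ (1/2 - 2 * δ) * (|ξ₁| * |ξ₂|) ^ (3/4 - 6 * δ) ≤
        (1 + |ξ| * |ξ₁| * |ξ₂|) ^ (1/2 - 2 * δ) *
          (|ξ₁| ^ (1/2 : ℝ) * (8 * |2 * ξ - ξ₁| ^ (1/2 : ℝ))) := by
      calc |ξ| ^ (1/2 - 2 * δ) * (|ξ₁| * |ξ₂|) ^ (3/4 - 6 * δ)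
          ≤ |ξ| ^ (1/2 - 2 * δ) *
            ((|ξ₁| * |ξ₂|) ^ (1/2 - 2 * δ) * (|ξ₁| ^ (1/2 : ℝ) * N ^ (1/2 : ℝ))) := by gcongr
        _ = (|ξ| ^ (1/2 - 2 * δ) * (|ξ₁| * |ξ₂|) ^ (1/2 - 2 * δ)) *
            (|ξ₁| ^ (1/2 : ℝ) * N ^ (1/2 : ℝ)) := by ring
        _ ≤ _ := by gcongr
    unfold fw
    have r1 := mul_nonneg pR p1
    have r2 := mul_nonneg pR p2
    linarith
  · -- here `ξ₁ ≈ 2 ξ`, hence `ξ₂ ≈ - ξ`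
    have t1 : |ξ₁| ≤ |2 * ξ - ξ₁| + 2 * |ξ| := by
      have := abs_sub (2 * ξ) (2 * ξ - ξ₁)
      rw [sub_sub_cancel, abs_mul, abs_two] at this
      linarith
    have t2 : |ξ₂| ≤ |2 * ξ - ξ₁| + |ξ| := by
      have := abs_sub (2 * ξ - ξ₁) ξ
      rwa [show 2 * ξ - ξ₁ - ξ = ξ₂ by rw [h]; ring] at this
    have t3 : |ξ₁| ≤ |2 * ξ - ξ₁| + 2 * |ξ₂| := by
      have := abs_sub (2 * ξ - ξ₁) (2 * ξ₂)
      rwa [show 2 * ξ - ξ₁ - 2 * ξ₂ = ξ₁ by rw [h]; ring, abs_mul, abs_two] at this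
    have t4 : 2 * |ξ₂| ≤ |2 * ξ - ξ₁| + |ξ₁| := by
      have := abs_sub (2 * ξ - ξ₁) ξ₁
      rwa [show 2 * ξ - ξ₁ - ξ₁ = 2 * ξ₂ by rw [h]; ring, abs_mul, abs_two] at this
    have hm : N = |ξ₁| ∨ N = |ξ₂| := max_choice _ _
    have c0 : N / 4 ≤ |ξ| := by rcases hm with hm | hm <;> linarith
    have c1 : N / 4 ≤ |ξ₁| := by rcases hm with hm | hm <;> linarith
    have c2 : N / 4 ≤ |ξ₂| := by rcases hm with hm | hm <;> linarith
    have := mu_comparable hδ hδ' (by linarith) c0 x0N c1 (by linarith) c2 (by linarith) c1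
    unfold fw
    have r1 := mul_nonneg pR p1
    linarith

lemma mu_Q2 {δ ξ ξ₁ ξ₂ : ℝ} (hδ : 0 < δ) (hδ' : δ ≤ 1/48) (h : ξ = ξ₁ + ξ₂)
    (h1 : 1 ≤ |ξ₁|) (h2 : 1 ≤ |ξ₂|) :
    mu (3/4 - 6 * δ) |ξ| |ξ₁| |ξ₂| ≤
      18432 * ((1 + |ξ| * |ξ₁| * |ξ₂|) ^ (1/2 - 2 * δ) * fw ξ₂ ξ) := by
  have := mu_Q1 hδ hδ' (ξ := ξ) (ξ₁ := ξ₂) (ξ₂ := ξ₁) (by linarith) h2 h1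
  rw [show |ξ| * |ξ₂| * |ξ₁| = |ξ| * |ξ₁| * |ξ₂| by ring] at this
  convert this using 1
  unfold mu; ring

lemma gain {c R S θ A m w : ℝ} (hc : 0 < c) (hc1 : c ≤ 1) (hR : 0 ≤ R) (hS : 0 < S)
    (hθ : 0 ≤ θ) (hθ1 : θ ≤ 1) (hA : 0 ≤ A) (hw : 0 ≤ w) (hRS : c * R ≤ S)
    (hm : m ≤ A * (R ^ θ * w)) : m * S ^ (-θ) ≤ A * c⁻¹ * w := by
  have h1 : R ^ θ ≤ c⁻¹ * S ^ θ := by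
    apply rpow_scale_div ((one_le_inv₀ hc).mpr hc1) hR hθ hθ1
    rw [← div_eq_inv_mul, le_div_iff₀ hc]
    linarith
  have p : 0 < S ^ θ := by positivity
  calc m * S ^ (-θ) ≤ A * ((c⁻¹ * S ^ θ) * w) * S ^ (-θ) := by
        gcongr
        exact hm.trans (by gcongr)
    _ = A * c⁻¹ * w := by
        rw [Real.rpow_neg hS.le]
        field_simp

lemma md_neg (a : ℝ) (z w : ℝ × ℝ) : jb (md a (z - w)) = jb (md a (w - z)) := by
  unfold jb
  congr 1
  rw [← abs_neg]
  congr 1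
  simp only [md, Prod.fst_sub, Prod.snd_sub]
  ring

lemma swap_exp {S T b θ : ℝ} (hS : 1 ≤ S) (hST : S ≤ T) (hb : θ ≤ b) :
    S ^ (-θ) * T ^ (-b) ≤ S ^ (-b) * T ^ (-θ) := by
  have pS : 0 < S := by linarith
  have pT : 0 < T := by linarith
  have h : S ^ (b - θ) ≤ T ^ (b - θ) := Real.rpow_le_rpow pS.le hST (by linarith)
  have e1 : S ^ (-θ) = S ^ (-b) * S ^ (b - θ) := by
    rw [← Real.rpow_add pS]; congr 1; ring
  have e2 : T ^ (-θ) = T ^ (-b) * T ^ (b - θ) := by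
    rw [← Real.rpow_add pT]; congr 1; ring
  rw [e1, e2]
  calc S ^ (-b) * S ^ (b - θ) * T ^ (-b) ≤ S ^ (-b) * T ^ (b - θ) * T ^ (-b) := by gcongr
    _ = _ := by ring

lemma claimP {a δ : ℝ} (ha : a ≠ 0) (hδ : 0 < δ) (hδ' : δ ≤ 1/48) (z z₁ : ℝ × ℝ) :
    mu (3/4 - 6 * δ) |z.2| |z₁.2| |(z - z₁).2| *
      (jb (md a z) ^ (-(1/2 - 2 * δ)) *
        (jb (md a z₁) ^ (-(1/2 + δ)) * jb (md a (z - z₁)) ^ (-(1/2 + δ)))) ≤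
      18432 * (min 1 |a|)⁻¹ *
        (kk a (1/2 + δ) z z₁ + kk a (1/2 + δ) z₁ z + kk a (1/2 + δ) (z - z₁) z) := by
  set b := 1/2 + δ with hb
  set θ := 1/2 - 2 * δ with hθ
  set c := min 1 |a| with hc
  have ha' : 0 < |a| := abs_pos.mpr ha
  have c0 : 0 < c := lt_min one_pos ha'
  have c1 : c ≤ 1 := min_le_left _ _
  have ca : c ≤ |a| := min_le_right _ _
  have ci : 1 ≤ c⁻¹ := (one_le_inv₀ c0).mpr c1
  have K0 := kk_nonneg a b z z₁
  have K1 := kk_nonneg a b z₁ z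
  have K2 := kk_nonneg a b (z - z₁) z
  have k1 : kk a b z₁ z = fw z₁.2 z.2 * (jb (md a z) ^ (-b) * jb (md a (z - z₁)) ^ (-b)) := by
    unfold kk; rw [md_neg a z z₁]
  have k2 : kk a b (z - z₁) z =
      fw (z - z₁).2 z.2 * (jb (md a z) ^ (-b) * jb (md a z₁) ^ (-b)) := by
    unfold kk; rw [md_neg a (z - z₁) z, sub_sub_cancel]
  have k0 : kk a b z z₁ =
      fw z.2 z₁.2 * (jb (md a z₁) ^ (-b) * jb (md a (z - z₁)) ^ (-b)) := rfl
  have hsum : z.2 = z₁.2 + (z - z₁).2 := by simp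
  have hres : 3 * (|a| * (|z.2| * |z₁.2| * |(z - z₁).2|)) ≤
      |md a z| + |md a z₁| + |md a (z - z₁)| := by
    have e : md a z - (md a z₁ + md a (z - z₁)) = -(3 * (a * (z.2 * z₁.2 * (z - z₁).2))) := by
      simp only [md, Prod.fst_sub, Prod.snd_sub]; ring
    have := abs_sub (md a z) (md a z₁ + md a (z - z₁))
    rw [e, abs_neg] at this
    simp only [abs_mul] at this
    rw [abs_of_pos (by norm_num : (0:ℝ) < 3)] at this
    linarith [abs_add_le (md a z₁) (md a (z - z₁))]
  have s0 := jb_ge (md a z)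
  have s1 := jb_ge (md a z₁)
  have s2 := jb_ge (md a (z - z₁))
  have d0 : jb (md a z) = 1 + |md a z| := rfl
  have d1 : jb (md a z₁) = 1 + |md a z₁| := rfl
  have d2 : jb (md a (z - z₁)) = 1 + |md a (z - z₁)| := rfl
  rw [k0] at K0
  rw [k1] at K1
  rw [k2] at K2
  rw [k0, k1, k2]
  generalize jb (md a z) = S₀ at *
  generalize jb (md a z₁) = S₁ at *
  generalize jb (md a (z - z₁)) = S₂ at *
  generalize z.2 = ξ at *
  generalize z₁.2 = ξ₁ at *
  generalize (z - z₁).2 = ξ₂ at *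
  have p0 : 0 < S₀ ^ (-b) := Real.rpow_pos_of_pos (by linarith) _
  have p1 : 0 < S₁ ^ (-b) := Real.rpow_pos_of_pos (by linarith) _
  have p2 : 0 < S₂ ^ (-b) := Real.rpow_pos_of_pos (by linarith) _
  set m := mu (3/4 - 6 * δ) |ξ| |ξ₁| |ξ₂| with hm
  have hm0 : 0 ≤ m := by rw [hm]; unfold mu; positivity
  have hcC : 0 ≤ 18432 * c⁻¹ := by positivity
  by_cases hsm : |ξ₁| < 1 ∨ |ξ₂| < 1
  · have h1 := mu_small (ρ := 3/4 - 6 * δ) (by linarith) (by linarith) hsum hsm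
    have h2 : S₀ ^ (-θ) ≤ 1 := Real.rpow_le_one_of_one_le_of_nonpos s0 (by linarith)
    have q0 : 0 ≤ S₀ ^ (-θ) := Real.rpow_nonneg (by linarith) _
    calc m * (S₀ ^ (-θ) * (S₁ ^ (-b) * S₂ ^ (-b)))
        ≤ m * (1 * (S₁ ^ (-b) * S₂ ^ (-b))) := by gcongr
      _ ≤ (16 * fw ξ ξ₁) * (1 * (S₁ ^ (-b) * S₂ ^ (-b))) := by gcongr
      _ = 16 * (fw ξ ξ₁ * (S₁ ^ (-b) * S₂ ^ (-b))) := by ring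
      _ ≤ 18432 * c⁻¹ * (fw ξ ξ₁ * (S₁ ^ (-b) * S₂ ^ (-b))) := by
          gcongr
          linarith
      _ ≤ _ := by gcongr; linarith
  push Not at hsm
  obtain ⟨x1, x2⟩ := hsm
  set P := |ξ| * |ξ₁| * |ξ₂| with hP
  have hP0 : 0 ≤ P := by positivity
  have hcP : c * P ≤ |a| * P := by gcongr
  have R0 : 0 ≤ 1 + P := by linarith
  by_cases hmax0 : S₁ ≤ S₀ ∧ S₂ ≤ S₀
  · have hg := gain c0 c1 R0 (by linarith : 0 < S₀) (θ := θ) (by linarith) (by linarith)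
      (by norm_num) (fw_nonneg ξ ξ₁) (by linarith [hmax0.1, hmax0.2]) (mu_Q0 hδ hδ' hsum x1 x2)
    calc m * (S₀ ^ (-θ) * (S₁ ^ (-b) * S₂ ^ (-b)))
        = (m * S₀ ^ (-θ)) * (S₁ ^ (-b) * S₂ ^ (-b)) := by ring
      _ ≤ (18432 * c⁻¹ * fw ξ ξ₁) * (S₁ ^ (-b) * S₂ ^ (-b)) := by gcongr
      _ = 18432 * c⁻¹ * (fw ξ ξ₁ * (S₁ ^ (-b) * S₂ ^ (-b))) := by ring
      _ ≤ _ := by gcongr; linarith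
  by_cases hmax1 : S₀ ≤ S₁ ∧ S₂ ≤ S₁
  · have hg := gain c0 c1 R0 (by linarith : 0 < S₁) (θ := θ) (by linarith) (by linarith)
      (by norm_num) (fw_nonneg ξ₁ ξ) (by linarith [hmax1.1, hmax1.2]) (mu_Q1 hδ hδ' hsum x1 x2)
    have hsw := swap_exp s0 hmax1.1 (by linarith : θ ≤ b)
    calc m * (S₀ ^ (-θ) * (S₁ ^ (-b) * S₂ ^ (-b)))
        = m * ((S₀ ^ (-θ) * S₁ ^ (-b)) * S₂ ^ (-b)) := by ring
      _ ≤ m * ((S₀ ^ (-b) * S₁ ^ (-θ)) * S₂ ^ (-b)) := by gcongr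
      _ = (m * S₁ ^ (-θ)) * (S₀ ^ (-b) * S₂ ^ (-b)) := by ring
      _ ≤ (18432 * c⁻¹ * fw ξ₁ ξ) * (S₀ ^ (-b) * S₂ ^ (-b)) := by gcongr
      _ = 18432 * c⁻¹ * (fw ξ₁ ξ * (S₀ ^ (-b) * S₂ ^ (-b))) := by ring
      _ ≤ _ := by gcongr; linarith
  · have hmax2 : S₀ ≤ S₂ ∧ S₁ ≤ S₂ := by
      constructor
      · by_contra h; push Not at h
        rcases le_total S₀ S₁ with h' | h'
        · exact hmax1 ⟨h', by linarith⟩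
        · exact hmax0 ⟨h', h.le⟩
      · by_contra h; push Not at h
        rcases le_total S₀ S₁ with h' | h'
        · exact hmax1 ⟨h', h.le⟩
        · exact hmax0 ⟨h', by linarith⟩
    have hg := gain c0 c1 R0 (by linarith : 0 < S₂) (θ := θ) (by linarith) (by linarith)
      (by norm_num) (fw_nonneg ξ₂ ξ) (by linarith [hmax2.1, hmax2.2]) (mu_Q2 hδ hδ' hsum x1 x2)
    have hsw := swap_exp s0 hmax2.1 (by linarith : θ ≤ b)
    calc m * (S₀ ^ (-θ) * (S₁ ^ (-b) * S₂ ^ (-b)))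
        = m * ((S₀ ^ (-θ) * S₂ ^ (-b)) * S₁ ^ (-b)) := by ring
      _ ≤ m * ((S₀ ^ (-b) * S₂ ^ (-θ)) * S₁ ^ (-b)) := by gcongr
      _ = (m * S₂ ^ (-θ)) * (S₀ ^ (-b) * S₁ ^ (-b)) := by ring
      _ ≤ (18432 * c⁻¹ * fw ξ₂ ξ) * (S₀ ^ (-b) * S₁ ^ (-b)) := by gcongr
      _ = 18432 * c⁻¹ * (fw ξ₂ ξ * (S₀ ^ (-b) * S₁ ^ (-b))) := by ring
      _ ≤ _ := by gcongr; linarith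

end Multiplier

section Assembly

/-- The square root of the weight in `XNorm`. -/
noncomputable def wt (a σ s b : ℝ) (z : ℝ × ℝ) : ℝ :=
  Real.exp (σ * |z.2|) * (1 + |z.2|) ^ s * jb (md a z) ^ b

lemma wt_nonneg (a σ s b : ℝ) (z : ℝ × ℝ) : 0 ≤ wt a σ s b z := by
  have := jb_pos (md a z)
  unfold wt
  positivity

lemma wt_continuous (a σ s b : ℝ) : Continuous (wt a σ s b) := by
  have h3 : Continuous (md a) := by unfold md; fun_prop
  have h1 : Continuous (fun z : ℝ × ℝ => (1 + |z.2|) ^ s) :=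
    (by fun_prop : Continuous (fun z : ℝ × ℝ => 1 + |z.2|)).rpow_const
      fun z => Or.inl (by positivity)
  have h2 : Continuous (fun z : ℝ × ℝ => Real.exp (σ * |z.2|)) := by fun_prop
  exact (h2.mul h1).mul ((jb_rpow_continuous b).comp h3)

lemma wt_sq (a σ s b : ℝ) (f : ℝ → ℝ → ℂ) (τ ξ : ℝ) :
    ENNReal.ofReal (Real.exp (2 * σ * |ξ|) * (1 + |ξ|) ^ (2 * s) *
        (1 + |τ - a * ξ ^ 3|) ^ (2 * b) * ‖FT2 f τ ξ‖ ^ 2) =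
      (ENNReal.ofReal (wt a σ s b (τ, ξ)) * ‖FT2 f τ ξ‖ₑ) ^ 2 := by
  rw [← ofReal_norm, ← ENNReal.ofReal_mul (wt_nonneg _ _ _ _ _),
    ← ENNReal.ofReal_pow (mul_nonneg (wt_nonneg _ _ _ _ _) (norm_nonneg _))]
  congr 1
  have e : ∀ (x r : ℝ), 0 < x → (x ^ r) ^ 2 = x ^ (2 * r) := by
    intro x r hx
    rw [← Real.rpow_natCast, ← Real.rpow_mul hx.le]
    congr 1; push_cast; ring
  have p := jb_pos (md a (τ, ξ))
  unfold wt
  rw [mul_pow, mul_pow, mul_pow, e _ _ p, e _ _ (by positivity), ← Real.exp_nat_mul]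
  simp only [jb, md]
  push_cast
  rw [mul_assoc 2 σ]

lemma XNorm_eq (a σ s b : ℝ) (f : SchwartzMap (ℝ × ℝ) ℂ) :
    XNorm a σ s b (fun t x => f (t, x)) = (∫⁻ z : ℝ × ℝ, (ENNReal.ofReal (wt a σ s b z) *
      ‖FT2 (fun t x => f (t, x)) z.1 z.2‖ₑ) ^ 2) ^ (1/2 : ℝ) := by
  unfold XNorm
  congr 1
  simp_rw [wt_sq]
  rw [Measure.volume_eq_prod, lintegral_prod]
  exact (((wt_continuous a σ s b).measurable.ennreal_ofReal.mul
    (FT2_continuous f).measurable.enorm).pow_const 2).aemeasurable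

lemma wt_bound {a δ s σ b' : ℝ} (ha : a ≠ 0) (hδ : 0 < δ) (hδ' : δ ≤ 1/48)
    (hs : -(3/4 - 6 * δ) ≤ s) (hσ : 0 ≤ σ) (hb' : b' - 1 ≤ -(1/2 - 2 * δ)) (z z₁ : ℝ × ℝ) :
    wt a σ s (b' - 1) z * |z.2| ≤ 18432 * (min 1 |a|)⁻¹ *
        (kk a (1/2 + δ) z z₁ + kk a (1/2 + δ) z₁ z + kk a (1/2 + δ) (z - z₁) z) *
      (wt a σ s (1/2 + δ) z₁ * wt a σ s (1/2 + δ) (z - z₁)) := by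
  have hP := claimP ha hδ hδ' z z₁
  set ρ := 3/4 - 6 * δ with hρ
  set b := 1/2 + δ with hb
  set θ := 1/2 - 2 * δ with hθ
  refine le_trans ?_ (mul_le_mul_of_nonneg_right hP
    (mul_nonneg (wt_nonneg _ _ _ _ _) (wt_nonneg _ _ _ _ _)))
  have s0 := jb_ge (md a z)
  have s1 := jb_pos (md a z₁)
  have s2 := jb_pos (md a (z - z₁))
  have tri : |z.2| ≤ |z₁.2| + |(z - z₁).2| := by
    have := abs_add_le z₁.2 (z - z₁).2
    rwa [Prod.snd_sub, add_sub_cancel] at this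
  unfold wt mu
  generalize jb (md a z) = S₀ at *
  generalize jb (md a z₁) = S₁ at *
  generalize jb (md a (z - z₁)) = S₂ at *
  have n0 := abs_nonneg z.2
  have n1 := abs_nonneg z₁.2
  have n2 := abs_nonneg (z - z₁).2
  generalize |z.2| = x₀ at *
  generalize |z₁.2| = x₁ at *
  generalize |(z - z₁).2| = x₂ at *
  have e1 : Real.exp (σ * x₀) ≤ Real.exp (σ * x₁) * Real.exp (σ * x₂) := by
    rw [← Real.exp_add]
    apply Real.exp_le_exp.mpr
    nlinarith
  have e2 : S₀ ^ (b' - 1) ≤ S₀ ^ (-θ) := Real.rpow_le_rpow_of_exponent_le s0 hb'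
  have e3 : (1 + x₀) ^ s ≤
      (1 + x₀) ^ (-ρ) * (((1 + x₁) ^ ρ * (1 + x₂) ^ ρ) * ((1 + x₁) ^ s * (1 + x₂) ^ s)) := by
    have q1 : (1 + x₀) ^ (s + ρ) ≤ ((1 + x₁) * (1 + x₂)) ^ (s + ρ) :=
      Real.rpow_le_rpow (by positivity) (by nlinarith) (by linarith)
    have q2 : (1 + x₀) ^ s = (1 + x₀) ^ (-ρ) * (1 + x₀) ^ (s + ρ) := by
      rw [← Real.rpow_add (by positivity)]; congr 1; ring
    rw [Real.mul_rpow (by positivity) (by positivity), Real.rpow_add (by positivity) s ρ,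
      Real.rpow_add (by positivity) s ρ, Real.rpow_add (by positivity) s ρ] at q1
    rw [Real.rpow_add (by positivity) s ρ] at q2
    rw [q2]
    refine mul_le_mul_of_nonneg_left (q1.trans (le_of_eq (by ring))) (by positivity)
  have p0 : 0 < S₀ := by linarith
  have i1 : S₁ ^ (-b) * S₁ ^ b = 1 := by rw [← Real.rpow_add s1]; simp
  have i2 : S₂ ^ (-b) * S₂ ^ b = 1 := by rw [← Real.rpow_add s2]; simp
  calc Real.exp (σ * x₀) * (1 + x₀) ^ s * S₀ ^ (b' - 1) * x₀
      ≤ (Real.exp (σ * x₁) * Real.exp (σ * x₂)) *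
        ((1 + x₀) ^ (-ρ) * (((1 + x₁) ^ ρ * (1 + x₂) ^ ρ) * ((1 + x₁) ^ s * (1 + x₂) ^ s))) *
          S₀ ^ (-θ) * x₀ := by gcongr
    _ = (Real.exp (σ * x₁) * Real.exp (σ * x₂)) *
        ((1 + x₀) ^ (-ρ) * (((1 + x₁) ^ ρ * (1 + x₂) ^ ρ) * ((1 + x₁) ^ s * (1 + x₂) ^ s))) *
          S₀ ^ (-θ) * x₀ * ((S₁ ^ (-b) * S₁ ^ b) * (S₂ ^ (-b) * S₂ ^ b)) := by
        rw [i1, i2]; ring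
    _ = _ := by ring

lemma tri_meas {k : ℝ × ℝ → ℝ × ℝ → ℝ≥0∞} {F G : ℝ × ℝ → ℝ≥0∞}
    (hkm : Measurable (Function.uncurry k)) (hFm : Measurable F) (hGm : Measurable G) :
    Measurable (fun p : (ℝ × ℝ) × (ℝ × ℝ) =>
      (k p.1 p.2 + k p.2 p.1 + k (p.1 - p.2) p.1) * (F p.2 * G (p.1 - p.2))) := by
  have m0 : Measurable (fun p : (ℝ × ℝ) × (ℝ × ℝ) => k p.1 p.2) := hkm
  have m1 : Measurable (fun p : (ℝ × ℝ) × (ℝ × ℝ) => k p.2 p.1) :=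
    hkm.comp (measurable_snd.prodMk measurable_fst)
  have m2 : Measurable (fun p : (ℝ × ℝ) × (ℝ × ℝ) => k (p.1 - p.2) p.1) :=
    hkm.comp ((measurable_fst.sub measurable_snd).prodMk measurable_fst)
  have m3 : Measurable (fun p : (ℝ × ℝ) × (ℝ × ℝ) => F p.2) := hFm.comp measurable_snd
  have m4 : Measurable (fun p : (ℝ × ℝ) × (ℝ × ℝ) => G (p.1 - p.2)) :=
    hGm.comp (measurable_fst.sub measurable_snd)
  exact ((m0.add m1).add m2).mul (m3.mul m4)

lemma conv_meas {u v : ℝ × ℝ → ℂ} (hu : Continuous u) (hv : Continuous v) (τ ξ : ℝ) :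
    Measurable (fun p : ℝ × ℝ => ‖u p‖ₑ * ‖v (τ - p.1, ξ - p.2)‖ₑ) := by
  have c : Continuous (fun p : ℝ × ℝ => v (τ - p.1, ξ - p.2)) := hv.comp (by fun_prop)
  exact hu.measurable.enorm.mul c.measurable.enorm

end Assembly

/-- Bilinear estimate (2.2)/(3.1): for `a₁ ≠ 0` and `s > −3/4` there exist
`b ∈ (1/2,1)`, `ε > 0` and `C > 0` such that for all `σ ≥ 0`, all
`b' ∈ [b, b+ε)` and all Schwartz `f, g` on `ℝ²`:
`‖∂_x(fg)‖_{X_{a₁}^{σ,s,b'−1}} ≤ C ‖f‖_{X_{a₁}^{σ,s,b}} ‖g‖_{X_{a₁}^{σ,s,b}}`. -/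
theorem bilinear_uu (a₁ s : ℝ) (ha₁ : a₁ ≠ 0) (hs : -(3/4) < s) :
    ∃ b ∈ Set.Ioo (1/2 : ℝ) 1, ∃ ε : ℝ, 0 < ε ∧ ∃ C : ℝ, 0 < C ∧
      ∀ σ : ℝ, 0 ≤ σ → ∀ b' ∈ Set.Ico b (b + ε),
        ∀ f g : SchwartzMap (ℝ × ℝ) ℂ,
          XNorm a₁ σ s (b' - 1) (fun t x => deriv (fun y => f (t, y) * g (t, y)) x) ≤
            ENNReal.ofReal C *
              (XNorm a₁ σ s b (fun t x => f (t, x)) * XNorm a₁ σ s b (fun t x => g (t, x))) := by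
  set δ := min (1/48) ((s + 3/4) / 6) with hδdef
  have hδ : 0 < δ := lt_min (by norm_num) (by linarith)
  have hδ' : δ ≤ 1/48 := min_le_left _ _
  have hδs : δ ≤ (s + 3/4) / 6 := min_le_right _ _
  obtain ⟨M, hMt, hM⟩ := kk_sq (a := a₁) (b := 1/2 + δ) ha₁ (by linarith)
  set A : ℝ≥0∞ := ENNReal.ofReal (18432 * (min 1 |a₁|)⁻¹) with hA
  have hfin : A * (3 * M ^ (1/2 : ℝ)) ≠ ⊤ := by
    have : M ^ (1/2 : ℝ) ≠ ⊤ := ENNReal.rpow_ne_top_of_nonneg (by norm_num) hMt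
    rw [hA]
    finiteness
  refine ⟨1/2 + δ, ⟨by linarith, by linarith⟩, δ, hδ,
    (A * (3 * M ^ (1/2 : ℝ))).toReal + 1, by positivity, ?_⟩
  intro σ hσ b' hb' f g
  have hCle : A * (3 * M ^ (1/2 : ℝ)) ≤
      ENNReal.ofReal ((A * (3 * M ^ (1/2 : ℝ))).toReal + 1) := by
    conv_lhs => rw [← ENNReal.ofReal_toReal hfin]
    exact ENNReal.ofReal_le_ofReal (by linarith)
  obtain ⟨k, hk⟩ : ∃ k : ℝ × ℝ → ℝ × ℝ → ℝ≥0∞,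
      k = fun z z₁ => ENNReal.ofReal (kk a₁ (1/2 + δ) z z₁) := ⟨_, rfl⟩
  have hkm : Measurable (Function.uncurry k) := hk ▸ kk_measurable a₁ (1/2 + δ)
  obtain ⟨F, hF⟩ : ∃ F : ℝ × ℝ → ℝ≥0∞, F = fun z =>
      ENNReal.ofReal (wt a₁ σ s (1/2 + δ) z) * ‖FT2 (fun t x => f (t, x)) z.1 z.2‖ₑ := ⟨_, rfl⟩
  obtain ⟨G, hG⟩ : ∃ G : ℝ × ℝ → ℝ≥0∞, G = fun z =>
      ENNReal.ofReal (wt a₁ σ s (1/2 + δ) z) * ‖FT2 (fun t x => g (t, x)) z.1 z.2‖ₑ := ⟨_, rfl⟩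
  have hFm : Measurable F := by
    rw [hF]
    exact (wt_continuous _ _ _ _).measurable.ennreal_ofReal.mul
      (FT2_continuous f).measurable.enorm
  have hGm : Measurable G := by
    rw [hG]
    exact (wt_continuous _ _ _ _).measurable.ennreal_ofReal.mul
      (FT2_continuous g).measurable.enorm
  obtain ⟨H, hH⟩ : ∃ H : ℝ × ℝ → ℝ≥0∞, H = fun z =>
    ∫⁻ z₁, (k z z₁ + k z₁ z + k (z - z₁) z) * (F z₁ * G (z - z₁)) := ⟨_, rfl⟩
  have hint : Measurable (fun p : (ℝ × ℝ) × (ℝ × ℝ) =>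
      (k p.1 p.2 + k p.2 p.1 + k (p.1 - p.2) p.1) * (F p.2 * G (p.1 - p.2))) := 
    tri_meas hkm hFm hGm
  have hHm : Measurable H := by
    rw [hH]
    exact hint.lintegral_prod_right'
  have hpt : ∀ τ ξ : ℝ, ENNReal.ofReal (wt a₁ σ s (b' - 1) (τ, ξ)) *
      ‖FT2 (fun t x => deriv (fun y => f (t, y) * g (t, y)) x) τ ξ‖ₑ ≤ A * H (τ, ξ) := by
    intro τ ξ
    have hm : Measurable (fun p : ℝ × ℝ => ‖FT2 (fun t x => f (t, x)) p.1 p.2‖ₑ *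
        ‖FT2 (fun t x => g (t, x)) (τ - p.1) (ξ - p.2)‖ₑ) :=
      conv_meas (FT2_continuous f) (FT2_continuous g) τ ξ
    have hm' : Measurable (fun z₁ => (k (τ, ξ) z₁ + k z₁ (τ, ξ) + k ((τ, ξ) - z₁) (τ, ξ)) *
        (F z₁ * G ((τ, ξ) - z₁))) := hint.comp measurable_prodMk_left
    refine (mul_le_mul_right (FT2_bound f g τ ξ) _).trans ?_
    rw [← mul_assoc, ← lintegral_const_mul _ hm, hH, ← lintegral_const_mul _ hm']
    apply lintegral_mono
    intro p
    have hw := wt_bound (s := s) (b' := b') ha₁ hδ hδ' (by linarith) hσ (by linarith [hb'.2])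
      (τ, ξ) p
    have k0 := kk_nonneg a₁ (1/2 + δ) (τ, ξ) p
    have k1 := kk_nonneg a₁ (1/2 + δ) p (τ, ξ)
    have k2 := kk_nonneg a₁ (1/2 + δ) ((τ, ξ) - p) (τ, ξ)
    have hc : 0 ≤ 18432 * (min 1 |a₁|)⁻¹ := by positivity
    have hw' := ENNReal.ofReal_le_ofReal hw
    rw [ENNReal.ofReal_mul (wt_nonneg _ _ _ _ _), ENNReal.ofReal_mul (by positivity),
      ENNReal.ofReal_mul hc, ENNReal.ofReal_mul (wt_nonneg _ _ _ _ _),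
      ENNReal.ofReal_add (by positivity) k2, ENNReal.ofReal_add k0 k1] at hw'
    refine (mul_le_mul_left hw' _).trans (le_of_eq ?_)
    simp only [hk, hF, hG, hA, Prod.fst_sub, Prod.snd_sub]
    ring
  have hL : XNorm a₁ σ s (b' - 1) (fun t x => deriv (fun y => f (t, y) * g (t, y)) x) ≤
      (∫⁻ z, (A * H z) ^ 2) ^ (1/2 : ℝ) := by
    unfold XNorm
    apply ENNReal.rpow_le_rpow _ (by norm_num)
    rw [Measure.volume_eq_prod, lintegral_prod _ ((hHm.const_mul A).pow_const 2).aemeasurable]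
    apply lintegral_mono
    intro τ
    apply lintegral_mono
    intro ξ
    simp only [wt_sq]
    exact pow_le_pow_left' (hpt τ ξ) 2
  rw [XNorm_eq, XNorm_eq]
  have hFe : ∀ z, ENNReal.ofReal (wt a₁ σ s (1/2 + δ) z) *
      ‖FT2 (fun t x => f (t, x)) z.1 z.2‖ₑ = F z := fun z => by rw [hF]
  have hGe : ∀ z, ENNReal.ofReal (wt a₁ σ s (1/2 + δ) z) *
      ‖FT2 (fun t x => g (t, x)) z.1 z.2‖ₑ = G z := fun z => by rw [hG]
  simp_rw [hFe, hGe]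
  refine hL.trans ?_
  have htri := tri_bound volume hkm (M := M) (by rw [hk]; exact hM) hFm hGm
  have hAH : ∫⁻ z, (A * H z) ^ 2 ≤ (A * (3 * (M ^ (1/2 : ℝ) * (∫⁻ x, F x ^ 2) ^ (1/2 : ℝ) *
      (∫⁻ x, G x ^ 2) ^ (1/2 : ℝ)))) ^ 2 := by
    have mH2 : Measurable (fun z => H z ^ 2) := hHm.pow_const 2
    simp_rw [mul_pow A]
    rw [lintegral_const_mul _ mH2]
    apply mul_le_mul_right
    rw [hH]
    exact htri
  refine (ENNReal.rpow_le_rpow hAH (by norm_num)).trans ?_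
  rw [← ENNReal.rpow_natCast, ← ENNReal.rpow_mul]
  norm_num only [Nat.cast_ofNat, ENNReal.rpow_one]
  calc _ = A * (3 * M ^ (1/2 : ℝ)) *
        ((∫⁻ x, F x ^ 2) ^ (1/2 : ℝ) * (∫⁻ x, G x ^ 2) ^ (1/2 : ℝ)) := by ring
    _ ≤ _ := by gcongr
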